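/- arXiv:2008.01011 — 6 statements merged into one kernel-verified Lean document; each statement's English description precedes it below -/
import Mathlib

section
/- Let d ∈ ℕ, let 𝒫 = (I_m)_{m∈ℕ} be a d-regular partition of a countably infinite index set I, let p, q ∈ (0,∞] and α ∈ (0,∞) with α > d·(1/2 − 1/p)_+. Then: (i) every x ∈ ℝ^I with ‖x‖_{𝒫,α}^{p,q} < ∞ belongs to ℓ²(I), and there is C > 0 with ‖x‖_{ℓ²} ≤ C·‖x‖_{𝒫,α}^{p,q} for all such x; (ii) the unit ball S := S_{𝒫,α}^{p,q} is a compact subset of ℓ²(I); (iii) there exist a codec (E_R, D_R)_{R∈ℕ} for S in ℓ²(I) and K > 0 such that δ(E_R, D_R) ≤ K·R^{−(α/d − (1/2 − 1/p))} for all R ∈ ℕ; in particular s*(S, ℓ²(I)) ≥ α/d − (1/2 − 1/p). -/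
open MeasureTheory Metric Set ENNReal

noncomputable section

/-- `‖x|_F‖_{ℓ^p(F)} ∈ [0,∞]` for a finset `F ⊆ I`. -/
def finsetLpNorm {I : Type*} (p : ℝ≥0∞) (F : Finset I) (x : I → ℝ) : ℝ≥0∞ :=
  if p = ∞ then ⨆ i ∈ F, ENNReal.ofReal |x i|
  else (∑ i ∈ F, ENNReal.ofReal |x i| ^ p.toReal) ^ (1 / p.toReal)

/-- `‖u‖_{ℓ^q(ℕ)} ∈ [0,∞]` for a sequence `u : ℕ → [0,∞]`. -/
def seqLqNorm (q : ℝ≥0∞) (u : ℕ → ℝ≥0∞) : ℝ≥0∞ :=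
  if q = ∞ then ⨆ m, u m else (∑' m, u m ^ q.toReal) ^ (1 / q.toReal)

/-- The mixed norm `‖x‖_{Pt,α,θ}^{p,q} ∈ [0,∞]`; the blocks are indexed by
`m + 1`, `m : ℕ`, realizing the index set `ℕ = {1, 2, …}` of the paper. -/
def mixedNorm {I : Type*} (Pt : ℕ → Finset I) (p q : ℝ≥0∞) (α θ : ℝ) (x : I → ℝ) : ℝ≥0∞ :=
  seqLqNorm q fun m =>
    ENNReal.ofReal ((2 : ℝ) ^ (α * ((m + 1 : ℕ) : ℝ)) * ((m + 1 : ℕ) : ℝ) ^ θ) *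
      finsetLpNorm p (Pt (m + 1)) x

/-- `Pt` is a `d`-regular partition of `I` with constants `0 < a < A`:
the sets `(Pt m)_{m ≥ 1}` partition `I` and `a·2^(dm) ≤ |Pt m| ≤ A·2^(dm)` for `m ≥ 1`. -/
structure IsRegularPartition {I : Type*} (d : ℕ) (Pt : ℕ → Finset I) (a A : ℝ) : Prop where
  a_pos : 0 < a
  a_lt_A : a < A
  partition : ∀ i : I, ∃! m : ℕ, 0 < m ∧ i ∈ Pt m
  card_lower : ∀ m : ℕ, 0 < m → a * 2 ^ (d * m) ≤ ((Pt m).card : ℝ)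
  card_upper : ∀ m : ℕ, 0 < m → ((Pt m).card : ℝ) ≤ A * 2 ^ (d * m)

variable {X : Type*}

/-- `CompressibleAt S s`: there is a codec `(E_R, D_R)_{R ∈ ℕ}` for `S` with
`sup_{R ∈ ℕ} R^s · δ(E_R, D_R) < ∞`. -/
def CompressibleAt [NormedAddCommGroup X] (S : Set X) (s : ℝ) : Prop :=
  ∃ (E : (R : ℕ) → S → (Fin R → Bool)) (D : (R : ℕ) → (Fin R → Bool) → X) (K : ℝ),
    ∀ R : ℕ, 0 < R → ∀ x : S, (R : ℝ) ^ s * ‖(x : X) - D R (E R x)‖ ≤ K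

/-- The optimal compression rate `s*(S, X) ∈ [0,∞]`. -/
def optRate [NormedAddCommGroup X] (S : Set X) : ℝ≥0∞ :=
  sSup (ENNReal.ofReal '' {s : ℝ | 0 ≤ s ∧ CompressibleAt S s})

/-- The approximation class `A^s(C)` of a codec `C = (E, D)`. -/
def approxClass [NormedAddCommGroup X] (S : Set X)
    (E : (R : ℕ) → S → (Fin R → Bool)) (D : (R : ℕ) → (Fin R → Bool) → X)
    (s : ℝ) : Set S :=
  {x : S | ∃ K : ℝ, ∀ R : ℕ, 0 < R → (R : ℝ) ^ s * ‖(x : X) - D R (E R x)‖ ≤ K}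

/-- `P` has (logarithmic) growth order `s₀`. -/
def HasGrowthOrder [NormedAddCommGroup X] [MeasurableSpace X] (S : Set X)
    (P : Measure S) (s₀ : ℝ) : Prop :=
  ∀ s : ℝ, s₀ < s → ∃ ε₀ c : ℝ, 0 < ε₀ ∧ 0 < c ∧
    ∀ (x : X) (ε : ℝ), 0 < ε → ε < ε₀ →
      P {y : S | (y : X) ∈ Metric.closedBall x ε} ≤
        ENNReal.ofReal ((2 : ℝ) ^ (-(c * ε ^ (-(1 : ℝ) / s))))

/-- Summing a nonnegative family over any finite set is controlled by its block sums. -/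
lemma IsRegularPartition.sum_le_of_block_le {I : Type*} {d : ℕ} {Pt : ℕ → Finset I} {a A : ℝ}
    (hreg : IsRegularPartition d Pt a A) {g : I → ℝ} (hg : ∀ i, 0 ≤ g i) {b : ℕ → ℝ} {C : ℝ}
    (hb : ∀ m, ∑ i ∈ Pt (m + 1), g i ≤ b m) (hC : ∀ n, ∑ m ∈ Finset.range n, b m ≤ C)
    (G : Finset I) : ∑ i ∈ G, g i ≤ C := by
  classical
  have hlev : ∀ i : I, ∃ m : ℕ, i ∈ Pt (m + 1) := by
    intro i
    obtain ⟨m, ⟨hm, hi⟩, -⟩ := hreg.partition i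
    exact ⟨m - 1, by rwa [Nat.sub_add_cancel hm]⟩
  choose lev hlev using hlev
  have hsub : G ⊆ (Finset.range (G.sup lev + 1)).biUnion fun m => Pt (m + 1) := by
    intro i hi
    rw [Finset.mem_biUnion]
    exact ⟨lev i, Finset.mem_range.2 (Nat.lt_succ_of_le (Finset.le_sup hi)), hlev i⟩
  have hdisj : ∀ m ∈ Finset.range (G.sup lev + 1), ∀ n ∈ Finset.range (G.sup lev + 1), m ≠ n →
      Disjoint (Pt (m + 1)) (Pt (n + 1)) := by
    intro m _ n _ hmn
    rw [Finset.disjoint_left]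
    intro i him hin
    exact hmn (Nat.succ_injective
      ((hreg.partition i).unique ⟨Nat.succ_pos m, him⟩ ⟨Nat.succ_pos n, hin⟩))
  calc ∑ i ∈ G, g i
      ≤ ∑ i ∈ (Finset.range (G.sup lev + 1)).biUnion fun m => Pt (m + 1), g i :=
        Finset.sum_le_sum_of_subset_of_nonneg hsub fun i _ _ => hg i
    _ = ∑ m ∈ Finset.range (G.sup lev + 1), ∑ i ∈ Pt (m + 1), g i := Finset.sum_biUnion hdisj
    _ ≤ ∑ m ∈ Finset.range (G.sup lev + 1), b m := Finset.sum_le_sum fun m _ => hb m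
    _ ≤ C := hC _

/-- Each term of a sequence is bounded by its `ℓ^q` norm. -/
lemma le_seqLqNorm {q : ℝ≥0∞} (hq : 0 < q) (u : ℕ → ℝ≥0∞) (m : ℕ) : u m ≤ seqLqNorm q u := by
  unfold seqLqNorm
  split_ifs with h
  · exact le_iSup u m
  · have hq' : 0 < q.toReal := ENNReal.toReal_pos hq.ne' h
    calc u m = (u m ^ q.toReal) ^ (1 / q.toReal) := by
          rw [← ENNReal.rpow_mul, mul_one_div_cancel hq'.ne', ENNReal.rpow_one]
      _ ≤ _ := ENNReal.rpow_le_rpow (ENNReal.le_tsum (f := fun m => u m ^ q.toReal) m)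
          (by positivity)

/-- Block-wise bound on a vector of finite mixed norm. -/
lemma finsetLpNorm_le_of_mixedNorm_le {I : Type*} {Pt : ℕ → Finset I} {p q : ℝ≥0∞} (hq : 0 < q)
    {α c : ℝ} {x : I → ℝ} (hx : mixedNorm Pt p q α 0 x ≤ ENNReal.ofReal c) (m : ℕ) :
    finsetLpNorm p (Pt (m + 1)) x
      ≤ ENNReal.ofReal ((2 : ℝ) ^ (-(α * ((m + 1 : ℕ) : ℝ))) * c) := by
  have h := (le_seqLqNorm hq _ m).trans hx
  simp only [Real.rpow_zero, mul_one] at h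
  have hpos : (0 : ℝ) < 2 ^ (α * ((m + 1 : ℕ) : ℝ)) := by positivity
  rw [Real.rpow_neg (by norm_num), ENNReal.ofReal_mul (by positivity),
    ENNReal.ofReal_inv_of_pos hpos]
  rwa [← ENNReal.div_eq_inv_mul,
    ENNReal.le_div_iff_mul_le (Or.inl (ENNReal.ofReal_pos.2 hpos).ne')
      (Or.inl ENNReal.ofReal_ne_top), mul_comm]

/-- A real form of a bound on a finite-exponent `ℓ^p` norm. -/
lemma sum_rpow_le_of_finsetLpNorm_le {I : Type*} {p : ℝ≥0∞} (hp : 0 < p) (hp' : p ≠ ∞)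
    {F : Finset I} {x : I → ℝ} {u : ℝ} (hu : 0 ≤ u)
    (h : finsetLpNorm p F x ≤ ENNReal.ofReal u) : ∑ i ∈ F, |x i| ^ p.toReal ≤ u ^ p.toReal := by
  have hp0 : 0 < p.toReal := ENNReal.toReal_pos hp.ne' hp'
  rw [finsetLpNorm, if_neg hp', one_div, ENNReal.rpow_inv_le_iff hp0,
    ENNReal.ofReal_rpow_of_nonneg hu hp0.le] at h
  simp_rw [ENNReal.ofReal_rpow_of_nonneg (abs_nonneg _) hp0.le] at h
  rw [← ENNReal.ofReal_sum_of_nonneg fun i _ => by positivity] at h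
  exact (ENNReal.ofReal_le_ofReal_iff (by positivity)).1 h

/-- Hölder's inequality between `ℓ^2` and `ℓ^p`, `p ≥ 2`, on a finite set. -/
lemma sum_sq_le_of_finsetLpNorm_le {I : Type*} {p : ℝ≥0∞} (hp : 2 < p)
    {F : Finset I} {x : I → ℝ} {u : ℝ} (hu : 0 ≤ u)
    (h : finsetLpNorm p F x ≤ ENNReal.ofReal u) :
    ∑ i ∈ F, |x i| ^ (2 : ℝ) ≤ (F.card : ℝ) ^ (1 - 2 * (1 / p.toReal)) * u ^ (2 : ℝ) := by
  by_cases hp' : p = ∞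
  · subst hp'
    rw [finsetLpNorm, if_pos rfl] at h
    have hx : ∀ i ∈ F, |x i| ≤ u := fun i hi =>
      (ENNReal.ofReal_le_ofReal_iff hu).1
        ((le_iSup₂ (f := fun i (_ : i ∈ F) => ENNReal.ofReal |x i|) i hi).trans h)
    calc ∑ i ∈ F, |x i| ^ (2 : ℝ) ≤ ∑ i ∈ F, u ^ (2 : ℝ) :=
          Finset.sum_le_sum fun i hi => Real.rpow_le_rpow (abs_nonneg _) (hx i hi) (by norm_num)
      _ = _ := by simp
  · have hsum := sum_rpow_le_of_finsetLpNorm_le (zero_lt_two.trans hp) hp' hu h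
    set r := p.toReal with hr
    have hr2 : 2 < r := by
      have := (ENNReal.toReal_lt_toReal (by norm_num) hp').2 hp
      simpa using this
    have hJ := Real.rpow_sum_le_const_mul_sum_rpow_of_nonneg (s := F)
      (f := fun i => |x i| ^ (2 : ℝ)) (p := r / 2) (by linarith) (fun i _ => by positivity)
    have hpow : ∀ i, (|x i| ^ (2 : ℝ)) ^ (r / 2) = |x i| ^ r := by
      intro i
      rw [← Real.rpow_mul (abs_nonneg _)]
      congr 1
      ring
    simp only [hpow] at hJ
    have hS : 0 ≤ ∑ i ∈ F, |x i| ^ (2 : ℝ) := Finset.sum_nonneg fun i _ => by positivity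
    have h1 : (∑ i ∈ F, |x i| ^ (2 : ℝ)) ^ (r / 2) ≤ (F.card : ℝ) ^ (r / 2 - 1) * u ^ r :=
      hJ.trans (mul_le_mul_of_nonneg_left hsum (by positivity))
    have h2 := Real.rpow_le_rpow (by positivity) h1 (show 0 ≤ 2 / r by positivity)
    rw [← Real.rpow_mul hS, Real.mul_rpow (by positivity) (by positivity), ← Real.rpow_mul hu,
      ← Real.rpow_mul (by positivity)] at h2
    have e1 : r / 2 * (2 / r) = 1 := by field_simp
    have e2 : r * (2 / r) = 2 := by field_simp
    have e3 : (r / 2 - 1) * (2 / r) = 1 - 2 * (1 / r) := by field_simp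
    rwa [e1, e2, e3, Real.rpow_one] at h2

/-- The mixed-norm balls embed into those with a finite inner exponent at most `2` and outer
exponent `∞`, at the cost of a smoothness shift which does not change the rate. -/
lemma exists_inner_exponent_le_two {I : Type*} {d : ℕ} (hd : 0 < d) {Pt : ℕ → Finset I}
    {a A : ℝ} (hreg : IsRegularPartition d Pt a A) {p q : ℝ≥0∞} (hp : 0 < p) (hq : 0 < q)
    {α : ℝ} (hα0 : 0 < α) (hα : (d : ℝ) * max (1 / 2 - 1 / p.toReal) 0 < α) :
    ∃ r β B : ℝ, 0 < r ∧ r ≤ 2 ∧ 0 < β ∧ 0 < B ∧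
      β / d - (1 / 2 - 1 / r) = α / d - (1 / 2 - 1 / p.toReal) ∧
      ∀ (x : I → ℝ) (c : ℝ), 0 ≤ c → mixedNorm Pt p q α 0 x ≤ ENNReal.ofReal c → ∀ m : ℕ,
        ∑ i ∈ Pt (m + 1), |x i| ^ r ≤ B * ((2 : ℝ) ^ (-(β * ((m + 1 : ℕ) : ℝ))) * c) ^ r := by
  have hd' : (0 : ℝ) < d := by exact_mod_cast hd
  rcases le_or_gt p 2 with h2 | h2
  · have hp' : p ≠ ∞ := ne_top_of_le_ne_top (by norm_num) h2
    refine ⟨p.toReal, α, 1, ENNReal.toReal_pos hp.ne' hp', ?_, hα0, one_pos, rfl, ?_⟩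
    · simpa using (ENNReal.toReal_le_toReal hp' (by norm_num)).2 h2
    · intro x c hc hx m
      rw [one_mul]
      exact sum_rpow_le_of_finsetLpNorm_le hp hp' (by positivity)
        (finsetLpNorm_le_of_mixedNorm_le hq hx m)
  · set t := 1 / p.toReal with ht
    have hA : 0 < A := hreg.a_pos.trans hreg.a_lt_A
    have ht2 : t ≤ 1 / 2 := by
      by_cases hp' : p = ∞
      · simp [ht, hp']
      · have := (ENNReal.toReal_lt_toReal (by norm_num) hp').2 h2
        exact one_div_le_one_div_of_le two_pos (by simpa using this.le)
    have hβ : 0 < α - d * (1 / 2 - t) := by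
      have := mul_le_mul_of_nonneg_left (le_max_left (1 / 2 - t) 0) hd'.le
      linarith
    refine ⟨2, α - d * (1 / 2 - t), A ^ (1 - 2 * t), two_pos, le_rfl, hβ, by positivity, ?_, ?_⟩
    · field_simp
      ring
    · intro x c hc hx m
      refine (sum_sq_le_of_finsetLpNorm_le h2 (by positivity)
        (finsetLpNorm_le_of_mixedNorm_le hq hx m)).trans ?_
      have hcard := hreg.card_upper (m + 1) m.succ_pos
      have hN : ((Pt (m + 1)).card : ℝ) ^ (1 - 2 * t)
          ≤ A ^ (1 - 2 * t) * (2 : ℝ) ^ (d * ((m + 1 : ℕ) : ℝ) * (1 - 2 * t)) := by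
        refine (Real.rpow_le_rpow (by positivity) hcard (by linarith)).trans_eq ?_
        rw [Real.mul_rpow hA.le (by positivity), Real.rpow_mul (by norm_num) _ (1 - 2 * t)]
        norm_cast
      refine (mul_le_mul_of_nonneg_right hN (by positivity)).trans_eq ?_
      rw [Real.mul_rpow (by positivity) hc, Real.mul_rpow (by positivity) hc,
        ← Real.rpow_mul (by norm_num), ← Real.rpow_mul (by norm_num)]
      rw [mul_assoc, ← mul_assoc ((2 : ℝ) ^ _), ← Real.rpow_add two_pos]
      congr 4
      ring

/-- A bound for the `ℓ^2` norm by the `ℓ^r` norm, `r ≤ 2`, on a finite set. -/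
lemma sum_sq_le_rpow_of_sum_rpow_le {I : Type*} {r : ℝ} (hr : 0 < r) (hr2 : r ≤ 2)
    {F : Finset I} {x : I → ℝ} {S : ℝ} (h : ∑ i ∈ F, |x i| ^ r ≤ S) :
    ∑ i ∈ F, x i ^ 2 ≤ S ^ (2 / r) := by
  have hS : 0 ≤ S := (Finset.sum_nonneg fun i _ => by positivity).trans h
  have hx : ∀ i ∈ F, x i ^ 2 ≤ |x i| ^ r * S ^ (2 / r - 1) := by
    intro i hi
    have h1 : |x i| ^ r ≤ S :=
      (Finset.single_le_sum (f := fun i => |x i| ^ r) (fun i _ => by positivity) hi).trans h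
    have h2 := Real.rpow_le_rpow (by positivity) h1
      (show 0 ≤ 2 / r - 1 by rw [sub_nonneg, le_div_iff₀ hr]; linarith)
    rw [← Real.rpow_mul (abs_nonneg _)] at h2
    calc x i ^ 2 = |x i| ^ r * |x i| ^ (r * (2 / r - 1)) := by
          rw [← Real.rpow_add_of_nonneg (abs_nonneg _) hr.le
            (by rw [mul_sub, mul_div_cancel₀ _ hr.ne']; linarith)]
          have : r + r * (2 / r - 1) = (2 : ℕ) := by field_simp; norm_num
          rw [this, Real.rpow_natCast, sq_abs]
      _ ≤ _ := mul_le_mul_of_nonneg_left h2 (by positivity)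
  calc ∑ i ∈ F, x i ^ 2 ≤ ∑ i ∈ F, |x i| ^ r * S ^ (2 / r - 1) := Finset.sum_le_sum hx
    _ = (∑ i ∈ F, |x i| ^ r) * S ^ (2 / r - 1) := by rw [Finset.sum_mul]
    _ ≤ S * S ^ (2 / r - 1) := mul_le_mul_of_nonneg_right h (by positivity)
    _ = S ^ (2 / r) := by
      have : S * S ^ (2 / r - 1) = S ^ (1 : ℝ) * S ^ (2 / r - 1) := by rw [Real.rpow_one]
      rw [this, ← Real.rpow_add_of_nonneg hS zero_le_one
        (by rw [sub_nonneg, le_div_iff₀ hr]; linarith)]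
      congr 1
      ring

/-- Two-sided exponential sums are bounded uniformly in their centre. -/
lemma exists_sum_two_rpow_neg_abs_le {c : ℝ} (hc : 0 < c) :
    ∃ C : ℝ, 0 < C ∧ ∀ (M : ℝ) (n : ℕ),
      ∑ m ∈ Finset.range n, (2 : ℝ) ^ (-(c * |((m + 1 : ℕ) : ℝ) - M|)) ≤ C := by
  have hgeo : Summable fun n : ℕ => (2 : ℝ) ^ (-(c * (n : ℝ))) := by
    have h : (2 : ℝ) ^ (-c) < 1 := Real.rpow_lt_one_of_one_lt_of_neg one_lt_two (by linarith)
    refine (summable_geometric_of_lt_one (by positivity) h).congr fun n => ?_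
    rw [← Real.rpow_natCast, ← Real.rpow_mul (by norm_num)]
    congr 1
    ring
  have hsum : Summable fun z : ℤ => (2 : ℝ) ^ (-(c * |(z : ℝ)|)) := by
    rw [summable_int_iff_summable_nat_and_neg]
    constructor <;> simpa using hgeo
  refine ⟨2 ^ c * ∑' z : ℤ, (2 : ℝ) ^ (-(c * |(z : ℝ)|)), ?_, fun M n => ?_⟩
  · have := hsum.tsum_pos (fun z => by positivity) 0 (by positivity)
    positivity
  · have hinj : Function.Injective fun m : ℕ => ((m + 1 : ℕ) : ℤ) - ⌊M⌋ := by
      intro m m' h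
      simpa using h
    calc ∑ m ∈ Finset.range n, (2 : ℝ) ^ (-(c * |((m + 1 : ℕ) : ℝ) - M|))
        ≤ ∑ m ∈ Finset.range n,
            (2 : ℝ) ^ c * (2 : ℝ) ^ (-(c * |((((m + 1 : ℕ) : ℤ) - ⌊M⌋ : ℤ) : ℝ)|)) := by
          refine Finset.sum_le_sum fun m _ => ?_
          rw [← Real.rpow_add two_pos]
          refine Real.rpow_le_rpow_of_exponent_le one_le_two ?_
          have h1 := Int.floor_le M
          have h2 := (Int.lt_floor_add_one M).le
          have h3 : |((((m + 1 : ℕ) : ℤ) - ⌊M⌋ : ℤ) : ℝ)| ≤ |((m + 1 : ℕ) : ℝ) - M| + 1 := by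
            have h4 : ((((m + 1 : ℕ) : ℤ) - ⌊M⌋ : ℤ) : ℝ)
                = (((m + 1 : ℕ) : ℝ) - M) + (M - ⌊M⌋) := by
              push_cast
              ring
            rw [h4]
            refine (abs_add_le _ _).trans ?_
            have : |M - ⌊M⌋| ≤ 1 := by rw [abs_le]; constructor <;> linarith
            linarith
          nlinarith
      _ = 2 ^ c * ∑ z ∈ (Finset.range n).map ⟨_, hinj⟩, (2 : ℝ) ^ (-(c * |(z : ℝ)|)) := by
          rw [Finset.sum_map, Finset.mul_sum]
          rfl
      _ ≤ _ := mul_le_mul_of_nonneg_left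
          (hsum.sum_le_tsum _ fun z _ => by positivity) (by positivity)

/-- A polynomial bound for the partition function of `z ↦ λ |z|^p` on the integers. -/
lemma exists_sum_exp_neg_le {p : ℝ} {r : ℕ} (hr : 2 ≤ r * p) :
    ∃ K : ℝ, 0 < K ∧ ∀ l : ℝ, 0 < l → ∀ s : Finset ℤ,
      ∑ z ∈ s, Real.exp (-(l * |(z : ℝ)| ^ p)) ≤ 1 + K / l ^ r := by
  have hsum : Summable fun z : ℤ => 1 / (z : ℝ) ^ 2 :=
    Real.summable_one_div_int_pow.2 one_lt_two
  have hpos : 0 < ∑' z : ℤ, 1 / (z : ℝ) ^ 2 :=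
    hsum.tsum_pos (fun z => by positivity) 1 (by norm_num)
  refine ⟨r.factorial * ∑' z : ℤ, 1 / (z : ℝ) ^ 2, by positivity, fun l hl s => ?_⟩
  have hz : ∀ z : ℤ, Real.exp (-(l * |(z : ℝ)| ^ p))
      ≤ (if z = 0 then 1 else 0) + r.factorial / l ^ r * (1 / (z : ℝ) ^ 2) := by
    intro z
    split_ifs with h
    · have : Real.exp (-(l * |(z : ℝ)| ^ p)) ≤ 1 := Real.exp_le_one_iff.2 (by
        have : 0 ≤ l * |(z : ℝ)| ^ p := by positivity
        linarith)
      have h' : 0 ≤ (r.factorial : ℝ) / l ^ r * (1 / (z : ℝ) ^ 2) := by positivity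
      linarith
    · have hz1 : (1 : ℝ) ≤ |(z : ℝ)| := by exact_mod_cast Int.one_le_abs h
      have hexp := Real.pow_div_factorial_le_exp (l * |(z : ℝ)| ^ p) (by positivity) r
      have hpow : (z : ℝ) ^ 2 ≤ (|(z : ℝ)| ^ p) ^ r := by
        rw [← Real.rpow_natCast (|(z : ℝ)| ^ p), ← Real.rpow_mul (by positivity), ← sq_abs,
          ← Real.rpow_natCast |(z : ℝ)|]
        exact Real.rpow_le_rpow_of_exponent_le hz1 (by push_cast; linarith)
      have hz2 : 0 < (z : ℝ) ^ 2 := by positivity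
      have hle : l ^ r * (z : ℝ) ^ 2 / r.factorial ≤ Real.exp (l * |(z : ℝ)| ^ p) := by
        refine le_trans ?_ hexp
        rw [mul_pow]
        gcongr
      rw [zero_add, Real.exp_neg, div_mul_div_comm, mul_one, ← inv_div]
      exact inv_anti₀ (by positivity) hle
  calc ∑ z ∈ s, Real.exp (-(l * |(z : ℝ)| ^ p))
      ≤ ∑ z ∈ s, ((if z = 0 then 1 else 0) + r.factorial / l ^ r * (1 / (z : ℝ) ^ 2)) :=
        Finset.sum_le_sum fun z _ => hz z
    _ = (∑ z ∈ s, if z = 0 then (1 : ℝ) else 0)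
        + r.factorial / l ^ r * ∑ z ∈ s, 1 / (z : ℝ) ^ 2 := by
        rw [Finset.sum_add_distrib, Finset.mul_sum]
    _ ≤ 1 + r.factorial / l ^ r * ∑' z : ℤ, 1 / (z : ℝ) ^ 2 := by
        gcongr
        · rw [Finset.sum_ite_eq']
          split_ifs <;> norm_num
        · exact hsum.sum_le_tsum _ fun z _ => by positivity
    _ = _ := by ring

/-- Counting integer vectors under a weighted constraint, by an exponential weight argument. -/
lemma card_le_exp_of_sum_le {I : Type*} {p K : ℝ} {r : ℕ} (hK : 0 < K)
    (hpart : ∀ l : ℝ, 0 < l → ∀ s : Finset ℤ,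
      ∑ z ∈ s, Real.exp (-(l * |(z : ℝ)| ^ p)) ≤ 1 + K / l ^ r)
    {l : I → ℝ} (hl : ∀ i, 0 < l i) (G : Finset I) (Y : Finset (I → ℤ))
    (hG : ∀ y ∈ Y, ∀ i ∉ G, y i = 0) {W : ℝ}
    (hW : ∀ y ∈ Y, ∑ i ∈ G, (l i * |(y i : ℝ)| ^ p + Real.log (1 + K / l i ^ r)) ≤ W) :
    (Y.card : ℝ) ≤ Real.exp W := by
  classical
  set φ : I → ℤ → ℝ := fun i z => Real.exp (-(l i * |(z : ℝ)| ^ p)) / (1 + K / l i ^ r) with hφ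
  have hden : ∀ i, 0 < 1 + K / l i ^ r := fun i => by
    have := hl i
    positivity
  have hφ0 : ∀ i z, 0 ≤ φ i z := fun i z => div_nonneg (Real.exp_pos _).le (hden i).le
  have hlow : ∀ y ∈ Y, Real.exp (-W) ≤ ∏ i : G, φ i (y i) := by
    intro y hy
    have hprod : ∏ i : G, φ i (y i)
        = Real.exp (-∑ i ∈ G, (l i * |(y i : ℝ)| ^ p + Real.log (1 + K / l i ^ r))) := by
      rw [← Finset.sum_neg_distrib, Real.exp_sum, ← Finset.prod_coe_sort G]
      refine Finset.prod_congr rfl fun i _ => ?_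
      rw [neg_add, Real.exp_add, Real.exp_neg (Real.log _), Real.exp_log (hden i)]
      exact div_eq_mul_inv _ _
    rw [hprod, Real.exp_le_exp]
    linarith [hW y hy]
  set ρ : (I → ℤ) → (G → ℤ) := fun y i => y i with hρ
  have hinj : Set.InjOn ρ Y := by
    intro y hy y' hy' h
    funext i
    by_cases hi : i ∈ G
    · exact congrFun h ⟨i, hi⟩
    · rw [hG y hy i hi, hG y' hy' i hi]
  set t : G → Finset ℤ := fun i => Y.image fun y => y i with ht
  have hsub : Y.image ρ ⊆ Fintype.piFinset t := by
    intro z hz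
    obtain ⟨y, hy, rfl⟩ := Finset.mem_image.1 hz
    exact Fintype.mem_piFinset.2 fun i => Finset.mem_image_of_mem (fun y : I → ℤ => y i) hy
  have hone : ∑ y ∈ Y, ∏ i : G, φ i (y i) ≤ 1 := by
    calc ∑ y ∈ Y, ∏ i : G, φ i (y i) = ∑ z ∈ Y.image ρ, ∏ i : G, φ i (z i) := by
          rw [Finset.sum_image hinj]
      _ ≤ ∑ z ∈ Fintype.piFinset t, ∏ i : G, φ i (z i) :=
          Finset.sum_le_sum_of_subset_of_nonneg hsub fun z _ _ =>
            Finset.prod_nonneg fun i _ => hφ0 _ _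
      _ = ∏ i : G, ∑ z ∈ t i, φ i z :=
          (Finset.prod_univ_sum t fun (i : G) (z : ℤ) => φ i z).symm
      _ ≤ 1 := by
          refine Finset.prod_le_one (fun i _ => Finset.sum_nonneg fun z _ => hφ0 _ _) fun i _ => ?_
          rw [hφ, ← Finset.sum_div, div_le_one (hden i)]
          exact hpart _ (hl i) _
  have hcard : (Y.card : ℝ) * Real.exp (-W) ≤ 1 := by
    rw [← nsmul_eq_mul]
    exact (Finset.card_nsmul_le_sum _ _ _ hlow).trans hone
  rwa [Real.exp_neg, ← div_eq_mul_inv, div_le_one (Real.exp_pos _)] at hcard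

lemma mul_two_rpow_le_mul_two_rpow {B C e e' : ℝ} (hB : 0 ≤ B) (hBC : B ≤ C) (he : e ≤ e') :
    B * (2 : ℝ) ^ e ≤ C * 2 ^ e' :=
  mul_le_mul hBC (Real.rpow_le_rpow_of_exponent_le one_le_two he) (by positivity) (hB.trans hBC)

/-- Step sizes `η` and counting weights `l` for the blocks: at level `m`, both the code length and
the squared error decay geometrically away from the critical level `M`. -/
lemma exists_level_parameters {d : ℕ} (hd : 0 < d) {p α : ℝ} (hp : 0 < p) (hp2 : p ≤ 2)
    (hα : 0 < α) :
    ∃ r : ℕ, 2 ≤ r * p ∧ ∀ K A B : ℝ, 0 < K → 0 < A → 0 < B → ∃ c C : ℝ, 0 < c ∧ 0 < C ∧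
      ∀ M m : ℝ, ∃ η l : ℝ, 0 < η ∧ 0 < l ∧ (M ≤ m → 1 ≤ l) ∧
        l * (B * 2 ^ (-(α * m * p)) / η ^ p) ≤ C * 2 ^ (d * M - c * |m - M|) ∧
        A * 2 ^ (d * m) * Real.log (1 + K / l ^ r) ≤ C * 2 ^ (d * M - c * |m - M|) ∧
        (A * 2 ^ (d * m) * η ^ 2 ≤
            C * 2 ^ (-(2 * (α + d / p - d / 2) * M) - c * |m - M|) ∨
          η ^ (2 - p) * (B * 2 ^ (-(α * m * p))) ≤
            C * 2 ^ (-(2 * (α + d / p - d / 2) * M) - c * |m - M|)) := by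
  have hd1 : (1 : ℝ) ≤ d := by exact_mod_cast hd
  set κ := α * p / 2 with hκ
  have hκ0 : 0 < κ := by positivity
  obtain ⟨r, hr⟩ := exists_nat_ge (max (2 / p) (2 * (d + 1) / κ))
  have hr1 : 2 ≤ r * p := by
    have := (le_max_left _ _).trans hr
    rwa [div_le_iff₀ hp] at this
  have hr2 : 2 * (d + 1) ≤ r * κ := by
    have := (le_max_right _ _).trans hr
    rwa [div_le_iff₀ hκ0] at this
  have hr0 : (0 : ℝ) < r := by
    by_contra h
    nlinarith
  refine ⟨r, hr1, fun K A B hK hA hB => ?_⟩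
  have hdp : (d : ℝ) / 2 ≤ d / p := by gcongr
  set τ := α + d / p - d / 2 + 1 with hτ
  have hτ0 : 0 < τ := by linarith
  set ε := d / (2 * r * τ * p) with hε
  have hε0 : 0 < ε := by positivity
  have hετ : r * ε * (τ * p) = d / 2 := by
    rw [hε]
    field_simp
  set c := min (κ / 2) (1 / 2) with hc
  have hc0 : 0 < c := by positivity
  have hc1 : c ≤ κ / 2 := min_le_left _ _
  have hc2 : c ≤ 1 / 2 := min_le_right _ _
  have hE : 0 < (1 + K) ^ ε / ε := by positivity
  refine ⟨c, B + A * K + A * ((1 + K) ^ ε / ε) + A, hc0, by positivity, fun M m => ?_⟩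
  have hAK : 0 < A * K := by positivity
  have hAE : 0 < A * ((1 + K) ^ ε / ε) := by positivity
  rcases le_or_gt M m with hM | hM
  · have hδ : 0 ≤ m - M := by linarith
    rw [abs_of_nonneg hδ]
    have h1 := mul_le_mul_of_nonneg_right hc1 hδ
    have h2 := mul_le_mul_of_nonneg_right hc2 hδ
    have h3 := mul_le_mul_of_nonneg_right hr2 hδ
    have h4 : 0 ≤ α * (m - M) := by positivity
    have h5 : 0 ≤ κ * (m - M) := by positivity
    refine ⟨2 ^ (-(α * m) - (d * M - κ * (m - M)) / p), 2 ^ (κ / 2 * (m - M)), by positivity,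
      by positivity, fun _ => Real.one_le_rpow one_le_two (by positivity), ?_, ?_, Or.inr ?_⟩
    · rw [← Real.rpow_mul two_pos.le, mul_div_assoc, ← Real.rpow_sub two_pos, mul_left_comm,
        ← Real.rpow_add two_pos]
      refine mul_two_rpow_le_mul_two_rpow hB.le (by linarith) ?_
      have : (-(α * m) - (d * M - κ * (m - M)) / p) * p
          = -(α * m * p) - (d * M - κ * (m - M)) := by field_simp
      rw [this]
      linarith
    · have hlog : Real.log (1 + K / (2 ^ (κ / 2 * (m - M))) ^ r)
          ≤ K * 2 ^ (-(κ / 2 * (m - M) * r)) := by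
        refine (Real.log_le_sub_one_of_pos (by positivity)).trans_eq ?_
        rw [add_sub_cancel_left, ← Real.rpow_natCast, ← Real.rpow_mul two_pos.le,
          Real.rpow_neg two_pos.le, div_eq_mul_inv]
      refine (mul_le_mul_of_nonneg_left hlog (by positivity)).trans ?_
      rw [mul_mul_mul_comm, ← Real.rpow_add two_pos]
      refine mul_two_rpow_le_mul_two_rpow hAK.le (by linarith) ?_
      linarith
    · rw [← Real.rpow_mul two_pos.le, mul_left_comm, ← Real.rpow_add two_pos]
      refine mul_two_rpow_le_mul_two_rpow hB.le (by linarith) ?_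
      have : (-(α * m) - (d * M - κ * (m - M)) / p) * (2 - p) + -(α * m * p)
          = -(2 * (α + d / p - d / 2) * M) - (α + κ) * (m - M) := by
        rw [hκ]
        field_simp
        ring
      rw [this]
      linarith
  · have hδ : 0 < M - m := by linarith
    rw [abs_sub_comm, abs_of_pos hδ]
    have h2 := mul_le_mul_of_nonneg_right hc2 hδ.le
    have h3 := mul_le_mul_of_nonneg_right hd1 hδ.le
    refine ⟨2 ^ (-(α * m) - (d * m + τ * p * (M - m)) / p), 2 ^ (-(τ * p * (M - m))),
      by positivity, by positivity, fun h => absurd h (not_le.2 hM), ?_, ?_, Or.inl ?_⟩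
    · rw [← Real.rpow_mul two_pos.le, mul_div_assoc, ← Real.rpow_sub two_pos, mul_left_comm,
        ← Real.rpow_add two_pos]
      refine mul_two_rpow_le_mul_two_rpow hB.le (by linarith) ?_
      have : (-(α * m) - (d * m + τ * p * (M - m)) / p) * p
          = -(α * m * p) - (d * m + τ * p * (M - m)) := by field_simp
      rw [this]
      linarith
    · have hinv : K / ((2 : ℝ) ^ (-(τ * p * (M - m)))) ^ r = K * 2 ^ (τ * p * (M - m) * r) := by
        rw [← Real.rpow_natCast, ← Real.rpow_mul two_pos.le, neg_mul, Real.rpow_neg two_pos.le,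
          div_inv_eq_mul]
      have hone : (1 : ℝ) ≤ 2 ^ (τ * p * (M - m) * r) :=
        Real.one_le_rpow one_le_two (by positivity)
      have hlog : Real.log (1 + K / ((2 : ℝ) ^ (-(τ * p * (M - m)))) ^ r)
          ≤ (1 + K) ^ ε / ε * 2 ^ (d / 2 * (M - m)) := by
        rw [hinv]
        refine (Real.log_le_rpow_div (by positivity) hε0).trans ?_
        rw [div_mul_eq_mul_div]
        refine div_le_div_of_nonneg_right ?_ hε0.le
        have h1 : 1 + K * (2 : ℝ) ^ (τ * p * (M - m) * r)
            ≤ (1 + K) * 2 ^ (τ * p * (M - m) * r) := by linarith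
        refine (Real.rpow_le_rpow (by positivity) h1 hε0.le).trans_eq ?_
        rw [Real.mul_rpow (by positivity) (by positivity), ← Real.rpow_mul two_pos.le, ← hετ]
        congr 2
        ring
      refine (mul_le_mul_of_nonneg_left hlog (by positivity)).trans ?_
      rw [mul_mul_mul_comm, ← Real.rpow_add two_pos]
      refine mul_two_rpow_le_mul_two_rpow hAE.le (by linarith) ?_
      linarith
    · rw [← Real.rpow_natCast, ← Real.rpow_mul two_pos.le, mul_assoc, ← Real.rpow_add two_pos]
      refine mul_two_rpow_le_mul_two_rpow hA.le (by linarith) ?_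
      have : d * m + (-(α * m) - (d * m + τ * p * (M - m)) / p) * (2 : ℕ)
          = -(2 * (α + d / p - d / 2) * M) - 2 * (M - m) := by
        rw [hτ]
        push_cast
        field_simp
        ring
      rw [this]
      linarith

/-- Rounding towards zero. -/
def truncInt (z : ℝ) : ℤ := if 0 ≤ z then ⌊z⌋ else ⌈z⌉

lemma abs_truncInt_le (z : ℝ) : |(truncInt z : ℝ)| ≤ |z| := by
  unfold truncInt
  split_ifs with h
  · have : (0 : ℝ) ≤ ⌊z⌋ := by exact_mod_cast Int.floor_nonneg.2 h
    rw [abs_of_nonneg this, abs_of_nonneg h]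
    exact Int.floor_le z
  · have hz : z < 0 := not_le.1 h
    have : (⌈z⌉ : ℝ) ≤ 0 := by exact_mod_cast Int.ceil_le.2 (by simpa using hz.le)
    rw [abs_of_nonpos this, abs_of_neg hz]
    exact neg_le_neg (Int.le_ceil z)

lemma abs_sub_truncInt_le (z : ℝ) : |z - truncInt z| ≤ 1 := by
  unfold truncInt
  split_ifs with h
  · rw [abs_le]
    constructor <;> linarith [Int.floor_le z, Int.lt_floor_add_one z]
  · rw [abs_le]
    constructor <;> linarith [Int.le_ceil z, Int.ceil_lt_add_one z]

lemma truncInt_eq_zero {z : ℝ} (hz : |z| < 1) : truncInt z = 0 := by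
  have h : |(truncInt z : ℝ)| < 1 := (abs_truncInt_le z).trans_lt hz
  exact Int.abs_lt_one_iff.1 (by exact_mod_cast h)

lemma abs_sub_le_of_truncInt_div_eq {x y η : ℝ} (hη : 0 < η)
    (h : truncInt (x / η) = truncInt (y / η)) : |x - y| ≤ 2 * η := by
  have h1 := abs_sub_truncInt_le (x / η)
  have h2 := abs_sub_truncInt_le (y / η)
  rw [← h] at h2
  have h3 : |x / η - y / η| ≤ 2 := by
    rw [abs_le] at *
    constructor <;> linarith
  rwa [← sub_div, abs_div, abs_of_pos hη, div_le_iff₀ hη] at h3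

/-- A quantizer with at most `2 ^ R` values and cells of diameter at most `ε` yields an
encoding/decoding pair of code-length `R` and distortion at most `ε`. -/
lemma exists_codec_of_quantizer {V Y : Type*} [NormedAddCommGroup V] {S : Set V} (Q : S → Y)
    {R : ℕ} (hcard : ∀ T : Finset Y, (T : Set Y) ⊆ Set.range Q → T.card ≤ 2 ^ R) {ε : ℝ}
    (hε : ∀ x x' : S, Q x = Q x' → ‖(x : V) - x'‖ ≤ ε) :
    ∃ (E : S → (Fin R → Bool)) (D : (Fin R → Bool) → V), ∀ x : S, ‖(x : V) - D (E x)‖ ≤ ε := by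
  classical
  have hfin : (Set.range Q).Finite := by
    by_contra h
    obtain ⟨T, hT, hT'⟩ := Set.Infinite.exists_subset_card_eq h (2 ^ R + 1)
    have := hcard T hT
    omega
  have : Fintype (Set.range Q) := hfin.fintype
  have hle : Fintype.card (Set.range Q) ≤ Fintype.card (Fin R → Bool) := by
    rw [← Set.toFinset_card]
    simpa using hcard (Set.range Q).toFinset (by simp)
  obtain ⟨e⟩ := Function.Embedding.nonempty_of_card_le hle
  set E : S → (Fin R → Bool) := fun x => e (Set.rangeFactorization Q x)
  refine ⟨E, fun b => if h : ∃ x : S, E x = b then (h.choose : V) else 0, fun x => ?_⟩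
  have hx : ∃ x' : S, E x' = E x := ⟨x, rfl⟩
  simp only [dif_pos hx]
  exact hε _ _ (congrArg Subtype.val (e.injective hx.choose_spec)).symm

/-- Error of a quantization with step size `η` on one block. -/
lemma sum_sq_sub_le {I : Type*} {p η S : ℝ} (hp : 0 < p) (hp2 : p ≤ 2) (hη : 0 < η)
    {F : Finset I} {x y : I → ℝ} (hx : ∑ i ∈ F, |x i| ^ p ≤ S) (hy : ∑ i ∈ F, |y i| ^ p ≤ S)
    (hxy : ∀ i ∈ F, |x i - y i| ≤ 2 * η) :
    ∑ i ∈ F, (x i - y i) ^ 2 ≤ 4 * (F.card * η ^ 2) ∧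
      ∑ i ∈ F, (x i - y i) ^ 2 ≤ 8 * (η ^ (2 - p) * S) := by
  constructor
  · calc ∑ i ∈ F, (x i - y i) ^ 2 ≤ ∑ i ∈ F, (2 * η) ^ 2 := by
          refine Finset.sum_le_sum fun i hi => ?_
          rw [← sq_abs]
          exact pow_le_pow_left₀ (abs_nonneg _) (hxy i hi) 2
      _ = _ := by
          rw [Finset.sum_const, nsmul_eq_mul]
          ring
  · have hpt : ∀ i ∈ F, (x i - y i) ^ 2 ≤ 4 * η ^ (2 - p) * (|x i| ^ p + |y i| ^ p) := by
      intro i hi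
      have hmax : |x i - y i| ^ p ≤ 2 ^ p * (|x i| ^ p + |y i| ^ p) := by
        have h1 : |x i - y i| ≤ 2 * max |x i| |y i| := by
          have := abs_sub (x i) (y i)
          linarith [le_max_left |x i| |y i|, le_max_right |x i| |y i|]
        refine (Real.rpow_le_rpow (abs_nonneg _) h1 hp.le).trans ?_
        rw [Real.mul_rpow two_pos.le (by positivity)]
        refine mul_le_mul_of_nonneg_left ?_ (by positivity)
        have hx0 : 0 ≤ |x i| ^ p := by positivity
        have hy0 : 0 ≤ |y i| ^ p := by positivity
        rcases max_choice |x i| |y i| with h | h <;> rw [h] <;> linarith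
      have hsplit : (x i - y i) ^ 2 = |x i - y i| ^ (2 - p) * |x i - y i| ^ p := by
        rw [← Real.rpow_add_of_nonneg (abs_nonneg _) (by linarith) hp.le, sub_add_cancel,
          Real.rpow_two, sq_abs]
      have hstep := Real.rpow_le_rpow (abs_nonneg _) (hxy i hi) (show 0 ≤ 2 - p by linarith)
      have h4 : (2 : ℝ) ^ (2 - p) * 2 ^ p = 4 := by
        rw [← Real.rpow_add two_pos, sub_add_cancel]
        norm_num
      calc (x i - y i) ^ 2 ≤ (2 * η) ^ (2 - p) * (2 ^ p * (|x i| ^ p + |y i| ^ p)) := by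
            rw [hsplit]
            exact mul_le_mul hstep hmax (by positivity) (by positivity)
        _ = (2 ^ (2 - p) * 2 ^ p) * η ^ (2 - p) * (|x i| ^ p + |y i| ^ p) := by
            rw [Real.mul_rpow two_pos.le hη.le]
            ring
        _ = _ := by rw [h4]
    calc ∑ i ∈ F, (x i - y i) ^ 2
        ≤ ∑ i ∈ F, 4 * η ^ (2 - p) * (|x i| ^ p + |y i| ^ p) := Finset.sum_le_sum hpt
      _ = 4 * η ^ (2 - p) * (∑ i ∈ F, |x i| ^ p + ∑ i ∈ F, |y i| ^ p) := by
          rw [← Finset.mul_sum, Finset.sum_add_distrib]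
      _ ≤ 4 * η ^ (2 - p) * (S + S) := by gcongr
      _ = _ := by ring

/-- Code length needed for one block. -/
lemma sum_weight_truncInt_le {I : Type*} {p η l t N S : ℝ} (hp : 0 < p) (hη : 0 < η) (hl : 0 < l)
    (ht : 0 ≤ t) {F : Finset I} {x : I → ℝ} (hx : ∑ i ∈ F, |x i| ^ p ≤ S)
    (hN : (F.card : ℝ) ≤ N) :
    ∑ i ∈ F, (l * |(truncInt (x i / η) : ℝ)| ^ p + t) ≤ l * (S / η ^ p) + N * t := by
  have hpt : ∀ i ∈ F, l * |(truncInt (x i / η) : ℝ)| ^ p + t ≤ l / η ^ p * |x i| ^ p + t := by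
    intro i _
    have h1 := Real.rpow_le_rpow (abs_nonneg _) (abs_truncInt_le (x i / η)) hp.le
    rw [abs_div, abs_of_pos hη, Real.div_rpow (abs_nonneg _) hη.le] at h1
    have h2 := mul_le_mul_of_nonneg_left h1 hl.le
    have h3 : l / η ^ p * |x i| ^ p = l * (|x i| ^ p / η ^ p) := by ring
    linarith
  calc ∑ i ∈ F, (l * |(truncInt (x i / η) : ℝ)| ^ p + t)
      ≤ ∑ i ∈ F, (l / η ^ p * |x i| ^ p + t) := Finset.sum_le_sum hpt
    _ = l / η ^ p * ∑ i ∈ F, |x i| ^ p + F.card * t := by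
        rw [Finset.sum_add_distrib, ← Finset.mul_sum, Finset.sum_const, nsmul_eq_mul]
    _ ≤ l / η ^ p * S + N * t := by gcongr
    _ = _ := by ring

/-- Encoding/decoding pairs of optimal order for sets with geometrically decaying blocks. -/
lemma exists_codec_of_block_bounds {I : Type*} {d : ℕ} (hd : 0 < d) {Pt : ℕ → Finset I}
    {a A : ℝ} (hreg : IsRegularPartition d Pt a A) {p α B : ℝ} (hp : 0 < p) (hp2 : p ≤ 2)
    (hα : 0 < α) (hB : 0 < B) {S : Set (lp (fun _ : I => ℝ) 2)}
    (hS : ∀ f ∈ S, ∀ m : ℕ,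
      ∑ i ∈ Pt (m + 1), |f i| ^ p ≤ B * 2 ^ (-(α * ((m + 1 : ℕ) : ℝ) * p))) :
    ∃ K : ℝ, 0 < K ∧ ∀ R : ℕ, 0 < R →
      ∃ (E : S → (Fin R → Bool)) (D : (Fin R → Bool) → lp (fun _ : I => ℝ) 2), ∀ x : S,
        ‖(x : lp (fun _ : I => ℝ) 2) - D (E x)‖
          ≤ K * (R : ℝ) ^ (-(α / (d : ℝ) - (1 / 2 - 1 / p))) := by
  classical
  have hd0 : (0 : ℝ) < d := by exact_mod_cast hd
  have hA : 0 < A := hreg.a_pos.trans hreg.a_lt_A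
  obtain ⟨r, hr, hlevel⟩ := exists_level_parameters hd hp hp2 hα
  obtain ⟨K₀, hK₀, hpart⟩ := exists_sum_exp_neg_le hr
  obtain ⟨c, C, hc, hC, hlevel⟩ := hlevel K₀ A B hK₀ hA hB
  obtain ⟨C₂, hC₂, hsum⟩ := exists_sum_two_rpow_neg_abs_le hc
  set s := α / (d : ℝ) - (1 / 2 - 1 / p) with hs
  set C₁ := 2 * C * C₂ with hC₁
  have hC₁0 : 0 < C₁ := by positivity
  have hlog2 : 0 < Real.log 2 := Real.log_pos one_lt_two
  refine ⟨Real.sqrt (8 * C * C₂) * (Real.log 2 / C₁) ^ (-s), by positivity, fun R hR => ?_⟩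
  have hR0 : (0 : ℝ) < R := by exact_mod_cast hR
  obtain ⟨M, hM⟩ : ∃ M : ℝ, (2 : ℝ) ^ (d * M) = R * (Real.log 2 / C₁) := by
    refine ⟨Real.logb 2 (R * (Real.log 2 / C₁)) / d, ?_⟩
    rw [mul_div_cancel₀ _ hd0.ne', Real.rpow_logb two_pos (by norm_num) (by positivity)]
  have hlev : ∀ i : I, ∃ m : ℕ, i ∈ Pt (m + 1) := by
    intro i
    obtain ⟨m, ⟨hm, hi⟩, -⟩ := hreg.partition i
    exact ⟨m - 1, by rwa [Nat.sub_add_cancel hm]⟩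
  choose lev hlev using hlev
  have hlev_eq : ∀ m : ℕ, ∀ i ∈ Pt (m + 1), lev i = m := fun m i hi => Nat.succ_injective
    ((hreg.partition i).unique ⟨Nat.succ_pos _, hlev i⟩ ⟨Nat.succ_pos m, hi⟩)
  choose η l hη hl hl1 hcode hcount herr using fun m : ℕ => hlevel M ((m + 1 : ℕ) : ℝ)
  have hN : ∀ m : ℕ, ((Pt (m + 1)).card : ℝ) ≤ A * 2 ^ (d * ((m + 1 : ℕ) : ℝ)) := by
    intro m
    refine (hreg.card_upper (m + 1) m.succ_pos).trans_eq ?_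
    norm_cast
  have hlog : ∀ m, 0 ≤ Real.log (1 + K₀ / l m ^ r) := fun m => Real.log_nonneg (by
    have : 0 ≤ K₀ / l m ^ r := div_nonneg hK₀.le (pow_nonneg (hl m).le _)
    linarith)
  -- High levels are quantized to zero.
  obtain ⟨L, hL⟩ := exists_nat_ge (max M (M + (d * M + Real.logb 2 C) / c))
  have hsmall : ∀ m : ℕ, L ≤ m → B * 2 ^ (-(α * ((m + 1 : ℕ) : ℝ) * p)) / η m ^ p < 1 := by
    intro m hm
    have hmL : (L : ℝ) + 1 ≤ ((m + 1 : ℕ) : ℝ) := by exact_mod_cast Nat.succ_le_succ hm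
    have h1 : M ≤ ((m + 1 : ℕ) : ℝ) := by linarith [(le_max_left _ _).trans hL]
    have h2 : (d * M + Real.logb 2 C) / c < ((m + 1 : ℕ) : ℝ) - M := by
      linarith [(le_max_right _ _).trans hL]
    rw [div_lt_iff₀ hc] at h2
    have h3 : C * (2 : ℝ) ^ (d * M - c * |((m + 1 : ℕ) : ℝ) - M|) < 1 := by
      rw [abs_of_nonneg (sub_nonneg.2 h1)]
      nth_rewrite 1 [← Real.rpow_logb two_pos (by norm_num) hC]
      rw [← Real.rpow_add two_pos]
      exact Real.rpow_lt_one_of_one_lt_of_neg one_lt_two (by linarith)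
    have h4 : 0 ≤ B * 2 ^ (-(α * ((m + 1 : ℕ) : ℝ) * p)) / η m ^ p := by
      have := hη m
      positivity
    exact ((le_mul_of_one_le_left h4 (hl1 m h1)).trans (hcode m)).trans_lt h3
  set G : Finset I := (Finset.range L).biUnion fun m => Pt (m + 1) with hG
  set Q : S → I → ℤ := fun x i => truncInt ((x : lp (fun _ : I => ℝ) 2) i / η (lev i)) with hQ
  have hQG : ∀ x : S, ∀ i ∉ G, Q x i = 0 := by
    intro x i hi
    have hLi : L ≤ lev i := by
      by_contra h
      exact hi (Finset.mem_biUnion.2 ⟨lev i, Finset.mem_range.2 (not_le.1 h), hlev i⟩)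
    refine truncInt_eq_zero ?_
    have h1 := (Finset.single_le_sum (f := fun i => |(x : lp (fun _ : I => ℝ) 2) i| ^ p)
      (fun i _ => by positivity) (hlev i)).trans (hS x x.2 (lev i))
    have hηi := hη (lev i)
    have h2 : |(x : lp (fun _ : I => ℝ) 2) i / η (lev i)| ^ p < 1 := by
      rw [abs_div, abs_of_pos hηi, Real.div_rpow (abs_nonneg _) hηi.le]
      exact (div_le_div_of_nonneg_right h1 (by positivity)).trans_lt (hsmall _ hLi)
    by_contra h
    exact absurd (Real.one_le_rpow (not_lt.1 h) hp.le) (not_le.2 h2)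
  have hW : ∀ x : S, ∑ i ∈ G, (l (lev i) * |(Q x i : ℝ)| ^ p
      + Real.log (1 + K₀ / l (lev i) ^ r)) ≤ R * Real.log 2 := by
    intro x
    refine hreg.sum_le_of_block_le
      (b := fun m => 2 * C * 2 ^ (d * M) * (2 : ℝ) ^ (-(c * |((m + 1 : ℕ) : ℝ) - M|)))
      (fun i => ?_) (fun m => ?_) (fun n => ?_) G
    · have := hl (lev i)
      have := hlog (lev i)
      positivity
    · have h := sum_weight_truncInt_le hp (hη m) (hl m) (hlog m) (hS x x.2 m) (hN m)
      have hrw : ∑ i ∈ Pt (m + 1), (l (lev i) * |(Q x i : ℝ)| ^ p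
          + Real.log (1 + K₀ / l (lev i) ^ r))
          = ∑ i ∈ Pt (m + 1), (l m * |(truncInt ((x : lp (fun _ : I => ℝ) 2) i / η m) : ℝ)| ^ p
            + Real.log (1 + K₀ / l m ^ r)) :=
        Finset.sum_congr rfl fun i hi => by simp only [hQ, hlev_eq m i hi]
      rw [hrw]
      refine h.trans ((add_le_add (hcode m) (hcount m)).trans_eq ?_)
      rw [sub_eq_add_neg, Real.rpow_add two_pos]
      ring
    · rw [← Finset.mul_sum]
      refine (mul_le_mul_of_nonneg_left (hsum M n) (by positivity)).trans_eq ?_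
      rw [hM, hC₁]
      field_simp
  refine (exists_codec_of_quantizer Q
    (ε := Real.sqrt (8 * C * C₂) * (Real.log 2 / C₁) ^ (-s) * (R : ℝ) ^ (-s)) ?_ ?_)
  · intro T hT
    have h := card_le_exp_of_sum_le hK₀ hpart (l := fun i => l (lev i)) (fun i => hl _) G T
      (W := R * Real.log 2)
      (fun y hy => by obtain ⟨x, rfl⟩ := hT hy; exact hQG x)
      (fun y hy => by obtain ⟨x, rfl⟩ := hT hy; exact hW x)
    rw [mul_comm, Real.exp_mul, Real.exp_log two_pos, Real.rpow_natCast] at h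
    exact_mod_cast h
  · intro x y hxy
    have hε : (Real.sqrt (8 * C * C₂) * (Real.log 2 / C₁) ^ (-s) * (R : ℝ) ^ (-s)) ^ 2
        = 8 * C * 2 ^ (-(2 * (α + d / p - d / 2) * M)) * C₂ := by
      have h1 : (Real.log 2 / C₁) ^ (-s) * (R : ℝ) ^ (-s) = 2 ^ (-((α + d / p - d / 2) * M)) := by
        rw [mul_comm, ← Real.mul_rpow hR0.le (by positivity), ← hM, ← Real.rpow_mul two_pos.le]
        congr 1
        rw [hs]
        field_simp
        ring
      rw [mul_assoc, h1, mul_pow, Real.sq_sqrt (by positivity), ← Real.rpow_natCast,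
        ← Real.rpow_mul two_pos.le]
      have h2 : -((α + d / p - d / 2) * M) * ((2 : ℕ) : ℝ)
          = -(2 * (α + d / p - d / 2) * M) := by
        push_cast
        ring
      rw [h2]
      ring
    refine lp.norm_le_of_forall_sum_le (by norm_num) (by positivity) fun F => ?_
    simp only [ENNReal.toReal_ofNat, Real.rpow_two]
    rw [hε]
    refine hreg.sum_le_of_block_le
      (b := fun m => 8 * C * 2 ^ (-(2 * (α + d / p - d / 2) * M))
        * (2 : ℝ) ^ (-(c * |((m + 1 : ℕ) : ℝ) - M|)))
      (fun i => by positivity) (fun m => ?_) (fun n => ?_) F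
    · have hstep : ∀ i ∈ Pt (m + 1), |(x : lp (fun _ : I => ℝ) 2) i
          - (y : lp (fun _ : I => ℝ) 2) i| ≤ 2 * η m := by
        intro i hi
        have h := congrFun hxy i
        simp only [hQ, hlev_eq m i hi] at h
        exact abs_sub_le_of_truncInt_div_eq (hη m) h
      obtain ⟨h1, h2⟩ := sum_sq_sub_le hp hp2 (hη m) (hS x x.2 m) (hS y y.2 m) hstep
      have hη2 : 0 ≤ η m ^ 2 := by positivity
      have h3 := mul_le_mul_of_nonneg_right (hN m) hη2
      have hpos : 0 ≤ C * (2 : ℝ) ^ (-(2 * (α + d / p - d / 2) * M)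
        - c * |((m + 1 : ℕ) : ℝ) - M|) := by positivity
      have hfin : ∑ i ∈ Pt (m + 1), ((x : lp (fun _ : I => ℝ) 2) i
          - (y : lp (fun _ : I => ℝ) 2) i) ^ 2
          ≤ 8 * (C * (2 : ℝ) ^ (-(2 * (α + d / p - d / 2) * M)
            - c * |((m + 1 : ℕ) : ℝ) - M|)) := by
        rcases herr m with h | h <;> linarith
      rw [sub_eq_add_neg, Real.rpow_add two_pos] at hfin
      simp only [lp.coeFn_sub, Pi.sub_apply, Real.norm_eq_abs, sq_abs]
      refine hfin.trans_eq ?_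
      ring
    · rw [← Finset.mul_sum]
      exact mul_le_mul_of_nonneg_left (hsum M n) (by positivity)

lemma continuous_finsetLpNorm {I : Type*} {p : ℝ≥0∞} (F : Finset I) :
    Continuous fun f : lp (fun _ : I => ℝ) 2 => finsetLpNorm p F ⇑f := by
  have hcoord : ∀ i, Continuous fun f : lp (fun _ : I => ℝ) 2 => ENNReal.ofReal |f i| :=
    fun i => ENNReal.continuous_ofReal.comp
      (continuous_abs.comp ((continuous_apply i).comp lp.uniformContinuous_coe.continuous))
  unfold finsetLpNorm
  split_ifs with h
  · simp_rw [← Finset.sup_eq_iSup]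
    exact Continuous.finset_sup_apply fun i _ => hcoord i
  · exact ENNReal.continuous_rpow_const.comp
      (continuous_finsetSum F fun i _ => ENNReal.continuous_rpow_const.comp (hcoord i))

lemma isClosed_mixedNorm_le_one {I : Type*} (Pt : ℕ → Finset I) {p q : ℝ≥0∞} (hq : 0 < q)
    (α θ : ℝ) : IsClosed {f : lp (fun _ : I => ℝ) 2 | mixedNorm Pt p q α θ ⇑f ≤ 1} := by
  have hterm : ∀ m : ℕ, Continuous fun f : lp (fun _ : I => ℝ) 2 =>
      ENNReal.ofReal ((2 : ℝ) ^ (α * ((m + 1 : ℕ) : ℝ)) * ((m + 1 : ℕ) : ℝ) ^ θ) *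
        finsetLpNorm p (Pt (m + 1)) ⇑f :=
    fun m => ENNReal.continuous_const_mul ENNReal.ofReal_ne_top |>.comp
      (continuous_finsetLpNorm _)
  unfold mixedNorm seqLqNorm
  split_ifs with h
  · exact (lowerSemicontinuous_iSup fun m => (hterm m).lowerSemicontinuous).isClosed_preimage 1
  · have hq' : 0 < q.toReal := ENNReal.toReal_pos hq.ne' h
    simp_rw [one_div, ENNReal.rpow_inv_le_iff hq', ENNReal.one_rpow]
    exact (lowerSemicontinuous_tsum fun m =>
      (ENNReal.continuous_rpow_const.comp (hterm m)).lowerSemicontinuous).isClosed_preimage 1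

/-- A set admitting codecs of arbitrarily small distortion is totally bounded. -/
lemma totallyBounded_of_codec {V : Type*} [NormedAddCommGroup V] {S : Set V} {s K : ℝ}
    (hs : 0 < s) (E : (R : ℕ) → S → (Fin R → Bool)) (D : (R : ℕ) → (Fin R → Bool) → V)
    (h : ∀ R : ℕ, 0 < R → ∀ x : S, ‖(x : V) - D R (E R x)‖ ≤ K * (R : ℝ) ^ (-s)) :
    TotallyBounded S := by
  rw [Metric.totallyBounded_iff]
  intro ε hε
  have hlim : Filter.Tendsto (fun R : ℕ => K * (R : ℝ) ^ (-s)) Filter.atTop (nhds (K * 0)) :=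
    ((tendsto_rpow_neg_atTop hs).comp tendsto_natCast_atTop_atTop).const_mul K
  rw [mul_zero] at hlim
  obtain ⟨R, hR, hR0⟩ := ((hlim.eventually_lt_const hε).and (Filter.eventually_gt_atTop 0)).exists
  refine ⟨Set.range (D R), Set.finite_range _, fun x hx => ?_⟩
  rw [Set.mem_iUnion₂]
  refine ⟨D R (E R ⟨x, hx⟩), ⟨_, rfl⟩, ?_⟩
  rw [mem_ball, dist_eq_norm]
  exact (h R hR0 ⟨x, hx⟩).trans_lt hR

/-- Square summability of vectors with geometrically decaying blocks. -/
lemma exists_sum_sq_le_of_block_bounds {I : Type*} {d : ℕ} {Pt : ℕ → Finset I}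
    {a A : ℝ} (hreg : IsRegularPartition d Pt a A) {r β B : ℝ} (hr : 0 < r) (hr2 : r ≤ 2)
    (hβ : 0 < β) (hB : 0 < B) :
    ∃ C : ℝ, 0 < C ∧ ∀ (x : I → ℝ) (c : ℝ), 0 ≤ c →
      (∀ m : ℕ, ∑ i ∈ Pt (m + 1), |x i| ^ r
        ≤ B * ((2 : ℝ) ^ (-(β * ((m + 1 : ℕ) : ℝ))) * c) ^ r) →
      ∀ F : Finset I, ∑ i ∈ F, x i ^ 2 ≤ (C * c) ^ 2 := by
  obtain ⟨C, hC, hsum⟩ := exists_sum_two_rpow_neg_abs_le (c := 2 * β) (by positivity)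
  refine ⟨Real.sqrt (B ^ (2 / r) * C), by positivity, fun x c hc hx F => ?_⟩
  rw [mul_pow, Real.sq_sqrt (by positivity)]
  refine hreg.sum_le_of_block_le
    (b := fun m => B ^ (2 / r) * c ^ 2 * (2 : ℝ) ^ (-(2 * β * |((m + 1 : ℕ) : ℝ) - 0|)))
    (fun i => sq_nonneg _) (fun m => ?_) (fun n => ?_) F
  · refine (sum_sq_le_rpow_of_sum_rpow_le hr hr2 (hx m)).trans_eq ?_
    rw [Real.mul_rpow hB.le (by positivity), ← Real.rpow_mul (by positivity),
      mul_div_cancel₀ _ hr.ne', Real.rpow_two, mul_pow, ← Real.rpow_natCast ((2 : ℝ) ^ _),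
      ← Real.rpow_mul two_pos.le, sub_zero, abs_of_nonneg (by positivity)]
    have : -(β * ((m + 1 : ℕ) : ℝ)) * ((2 : ℕ) : ℝ) = -(2 * β * ((m + 1 : ℕ) : ℝ)) := by
      push_cast
      ring
    rw [this]
    ring
  · rw [← Finset.mul_sum]
    refine (mul_le_mul_of_nonneg_left (hsum 0 n) (by positivity)).trans_eq ?_
    ring

theorem statement11 {I : Type*} [Countable I] [Infinite I]
    (d : ℕ) (hd : 0 < d) (Pt : ℕ → Finset I) (a A : ℝ)
    (hreg : IsRegularPartition d Pt a A)
    (p q : ℝ≥0∞) (hp : 0 < p) (hq : 0 < q) (α : ℝ) (hα0 : 0 < α)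
    (hα : (d : ℝ) * max (1 / 2 - 1 / p.toReal) 0 < α) :
    (∃ C : ℝ, 0 < C ∧ ∀ x : I → ℝ, mixedNorm Pt p q α 0 x ≠ ∞ →
      Memℓp x 2 ∧
        (∑' i, ENNReal.ofReal (x i ^ 2)) ^ ((1 : ℝ) / 2) ≤
          ENNReal.ofReal C * mixedNorm Pt p q α 0 x) ∧
    IsCompact {f : lp (fun _ : I => ℝ) 2 | mixedNorm Pt p q α 0 ⇑f ≤ 1} ∧
    (∃ (E : (R : ℕ) → {f : lp (fun _ : I => ℝ) 2 | mixedNorm Pt p q α 0 ⇑f ≤ 1} →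
          (Fin R → Bool))
       (D : (R : ℕ) → (Fin R → Bool) → lp (fun _ : I => ℝ) 2) (K : ℝ), 0 < K ∧
       ∀ R : ℕ, 0 < R → ∀ x : {f : lp (fun _ : I => ℝ) 2 | mixedNorm Pt p q α 0 ⇑f ≤ 1},
         ‖(x : lp (fun _ : I => ℝ) 2) - D R (E R x)‖ ≤
           K * (R : ℝ) ^ (-(α / (d : ℝ) - (1 / 2 - 1 / p.toReal)))) ∧
    ENNReal.ofReal (α / (d : ℝ) - (1 / 2 - 1 / p.toReal)) ≤
      optRate {f : lp (fun _ : I => ℝ) 2 | mixedNorm Pt p q α 0 ⇑f ≤ 1} := by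
  obtain ⟨r, β, B, hr, hr2, hβ, hB, hs, hblock⟩ :=
    exists_inner_exponent_le_two hd hreg hp hq hα0 hα
  have hd0 : (0 : ℝ) < d := by exact_mod_cast hd
  have hs0 : 0 < α / (d : ℝ) - (1 / 2 - 1 / p.toReal) := by
    have h1 : (1 / 2 - 1 / p.toReal) < α / d := by
      rw [lt_div_iff₀ hd0, mul_comm]
      exact (mul_le_mul_of_nonneg_left (le_max_left _ _) hd0.le).trans_lt hα
    linarith
  have hcodec : ∃ (E : (R : ℕ) → {f : lp (fun _ : I => ℝ) 2 | mixedNorm Pt p q α 0 ⇑f ≤ 1} →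
          (Fin R → Bool))
       (D : (R : ℕ) → (Fin R → Bool) → lp (fun _ : I => ℝ) 2) (K : ℝ), 0 < K ∧
       ∀ R : ℕ, 0 < R → ∀ x : {f : lp (fun _ : I => ℝ) 2 | mixedNorm Pt p q α 0 ⇑f ≤ 1},
         ‖(x : lp (fun _ : I => ℝ) 2) - D R (E R x)‖ ≤
           K * (R : ℝ) ^ (-(α / (d : ℝ) - (1 / 2 - 1 / p.toReal))) := by
    obtain ⟨K, hK, h⟩ := exists_codec_of_block_bounds hd hreg hr hr2 hβ hB
      (S := {f : lp (fun _ : I => ℝ) 2 | mixedNorm Pt p q α 0 ⇑f ≤ 1}) (fun f hf m => by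
        have := hblock ⇑f 1 zero_le_one (by simpa using hf) m
        rwa [mul_one, ← Real.rpow_mul two_pos.le, neg_mul] at this)
    rw [hs] at h
    have h' : ∀ R : ℕ, ∃ (E : {f : lp (fun _ : I => ℝ) 2 | mixedNorm Pt p q α 0 ⇑f ≤ 1} →
        (Fin R → Bool)) (D : (Fin R → Bool) → lp (fun _ : I => ℝ) 2), 0 < R →
        ∀ x : {f : lp (fun _ : I => ℝ) 2 | mixedNorm Pt p q α 0 ⇑f ≤ 1},
          ‖(x : lp (fun _ : I => ℝ) 2) - D (E x)‖
            ≤ K * (R : ℝ) ^ (-(α / (d : ℝ) - (1 / 2 - 1 / p.toReal))) := by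
      intro R
      rcases Nat.eq_zero_or_pos R with h0 | h0
      · exact ⟨fun _ _ => false, fun _ => 0, fun h1 => absurd h0 h1.ne'⟩
      · obtain ⟨E, D, hED⟩ := h R h0
        exact ⟨E, D, fun _ => hED⟩
    choose E D hED using h'
    exact ⟨E, D, K, hK, hED⟩
  refine ⟨?_, ?_, hcodec, ?_⟩
  · obtain ⟨C, hC, hsq⟩ := exists_sum_sq_le_of_block_bounds hreg hr hr2 hβ hB
    refine ⟨C, hC, fun x hx => ?_⟩
    set c := (mixedNorm Pt p q α 0 x).toReal with hc
    have hcx : mixedNorm Pt p q α 0 x = ENNReal.ofReal c := (ENNReal.ofReal_toReal hx).symm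
    have hc0 : 0 ≤ c := ENNReal.toReal_nonneg
    have hF := hsq x c hc0 (hblock x c hc0 hcx.le)
    have hsummable : Summable fun i => x i ^ 2 := summable_of_sum_le (fun i => sq_nonneg _) hF
    constructor
    · refine memℓp_gen ?_
      simpa using hsummable
    · rw [hcx, ← ENNReal.ofReal_mul hC.le, ← ENNReal.ofReal_tsum_of_nonneg
        (fun i => sq_nonneg _) hsummable,
        ENNReal.ofReal_rpow_of_nonneg (tsum_nonneg fun i => sq_nonneg _) (by norm_num),
        ← Real.sqrt_eq_rpow]
      refine ENNReal.ofReal_le_ofReal (Real.sqrt_le_iff.2 ⟨by positivity, ?_⟩)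
      exact hsummable.tsum_le_of_sum_le hF
  · obtain ⟨E, D, K, -, hED⟩ := hcodec
    exact (totallyBounded_of_codec hs0 E D hED).isCompact_of_isClosed
      (isClosed_mixedNorm_le_one Pt hq α 0)
  · obtain ⟨E, D, K, -, hED⟩ := hcodec
    refine le_sSup ⟨_, ⟨hs0.le, E, D, K, fun R hR x => ?_⟩, rfl⟩
    have hR0 : (0 : ℝ) < R := by exact_mod_cast hR
    refine (mul_le_mul_of_nonneg_left (hED R hR x) (by positivity)).trans_eq ?_
    rw [mul_left_comm, ← Real.rpow_add hR0, add_neg_cancel, Real.rpow_zero, mul_one]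
end
end

section
/- Let d ∈ ℕ, let 𝒫 = (I_m)_{m∈ℕ} be a d-regular partition of a countably infinite index set I, let p ∈ (0,∞] and α, θ ∈ ℝ with α > d·(1/2 − 1/p)_+, and set s* := α/d − (1/2 − 1/p) and w_m := m^θ·2^{αm}. For each m ∈ ℕ, let μ_m be the uniform probability measure on the closed ball B̄(0, w_m^{−1}; ℓ^p(I_m)) ⊆ ℝ^{I_m} (Lebesgue measure restricted to this ball and normalized to total mass 1), and let P := ⊗_{m∈ℕ} μ_m be the product probability measure on ℝ^I = ∏_{m∈ℕ} ℝ^{I_m}, equipped with the product σ-algebra. Then for every s > s* there exist c, ε0 > 0 such that for every x ∈ ℓ²(I) and every ε ∈ (0, ε0): P({y ∈ ℝ^I : ‖y − x‖_{ℓ²(I)} ≤ ε}) ≤ 2^{−c·ε^{−1/s}} (the set in question belongs to the product σ-algebra). -/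
open MeasureTheory Metric Set ENNReal

noncomputable section

/-- `‖y‖_{ℓ^p(F)} ∈ [0,∞]` for `F` a finite type. -/
def fintypeLpNorm {F : Type*} [Fintype F] (p : ℝ≥0∞) (y : F → ℝ) : ℝ≥0∞ :=
  if p = ∞ then ⨆ i, ENNReal.ofReal |y i|
  else (∑ i, ENNReal.ofReal |y i| ^ p.toReal) ^ (1 / p.toReal)

/-- The uniform probability measure on the closed ball `B̄(0, r; ℓ^p(F))` in `ℝ^F`:
Lebesgue measure restricted to the ball and normalized to total mass `1`. -/
def uniformBallMeasure {F : Type*} [Fintype F] (p : ℝ≥0∞) (r : ℝ) : Measure (F → ℝ) :=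
  (volume {y : F → ℝ | fintypeLpNorm p y ≤ ENNReal.ofReal r})⁻¹ •
    volume.restrict {y : F → ℝ | fintypeLpNorm p y ≤ ENNReal.ofReal r}

/-- A Euclidean ball of radius `ε` in dimension `n` has volume at most `(e √π ε / √n) ^ n`. -/
lemma volume_sum_sq_sub_le {F : Type*} [Fintype F] [Nonempty F] (x : F → ℝ) {ε : ℝ}
    (hε : 0 < ε) :
    volume {z : F → ℝ | ∑ i, (z i - x i) ^ 2 ≤ ε ^ 2} ≤
      ENNReal.ofReal
        ((Real.exp 1 * √Real.pi * (ε / √(Fintype.card F))) ^ Fintype.card F) := by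
  have hn : (0 : ℝ) < Fintype.card F := by exact_mod_cast Fintype.card_pos
  obtain ⟨b, hb_def⟩ : ∃ b : ℝ, b = Fintype.card F / ε ^ 2 := ⟨_, rfl⟩
  have hb : 0 < b := hb_def ▸ by positivity
  have hint : ∀ i : F, Integrable fun t : ℝ => Real.exp 1 * Real.exp (-b * (t - x i) ^ 2) :=
    fun i => ((integrable_exp_neg_mul_sq hb).comp_sub_right (x i)).const_mul _
  have hval : ∀ i : F, ∫ t : ℝ, Real.exp 1 * Real.exp (-b * (t - x i) ^ 2) =
      Real.exp 1 * √Real.pi * (ε / √(Fintype.card F)) := by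
    intro i
    rw [integral_const_mul, integral_sub_right_eq_self (fun t => Real.exp (-b * t ^ 2)) (x i),
      integral_gaussian, hb_def, div_div_eq_mul_div, Real.sqrt_div (by positivity),
      Real.sqrt_mul Real.pi_pos.le, Real.sqrt_sq hε.le]
    ring
  have hprod : Integrable fun z : F → ℝ =>
      ∏ i, (Real.exp 1 * Real.exp (-b * (z i - x i) ^ 2)) :=
    Integrable.fintype_prod (f := fun i t => Real.exp 1 * Real.exp (-b * (t - x i) ^ 2)) hint
  have hmeas : MeasurableSet {z : F → ℝ | ∑ i, (z i - x i) ^ 2 ≤ ε ^ 2} :=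
    measurableSet_le (by fun_prop) measurable_const
  have hle : ∀ z ∈ {z : F → ℝ | ∑ i, (z i - x i) ^ 2 ≤ ε ^ 2},
      (1 : ℝ≥0∞) ≤ ENNReal.ofReal (∏ i, (Real.exp 1 * Real.exp (-b * (z i - x i) ^ 2))) := by
    intro z hz
    rw [ENNReal.one_le_ofReal]
    simp_rw [← Real.exp_add, ← Real.exp_sum]
    rw [Real.one_le_exp_iff, Finset.sum_add_distrib, ← Finset.mul_sum]
    have h : b * ∑ i, (z i - x i) ^ 2 ≤ b * ε ^ 2 := mul_le_mul_of_nonneg_left hz hb.le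
    have h' : b * ε ^ 2 = Fintype.card F := by
      rw [hb_def, div_mul_cancel₀ _ (by positivity)]
    simp only [Finset.sum_const, Finset.card_univ, nsmul_eq_mul, mul_one]
    linarith
  have htotal : ∫ z : F → ℝ, ∏ i, (Real.exp 1 * Real.exp (-b * (z i - x i) ^ 2)) =
      (Real.exp 1 * √Real.pi * (ε / √(Fintype.card F))) ^ Fintype.card F := by
    rw [integral_fintype_prod_volume_eq_prod
      (fun i t => Real.exp 1 * Real.exp (-b * (t - x i) ^ 2))]
    simp only [hval, Finset.prod_const, Finset.card_univ]
  rw [← htotal, ofReal_integral_eq_lintegral_ofReal hprod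
    (Filter.Eventually.of_forall fun z => by positivity), ← setLIntegral_one]
  exact (setLIntegral_mono' hmeas hle).trans (setLIntegral_le_lintegral _ _)

/-- The `ℓ^p` ball of radius `r` in dimension `n` contains a cube of side length
`2 r n ^ (-1/p)`. -/
lemma le_volume_fintypeLpNorm_le {F : Type*} [Fintype F] [Nonempty F] {p : ℝ≥0∞} (hp : 0 < p)
    {r : ℝ} (hr : 0 < r) :
    ENNReal.ofReal
        ((2 * (r * (Fintype.card F : ℝ) ^ (-(1 / p.toReal)))) ^ Fintype.card F) ≤
      volume {y : F → ℝ | fintypeLpNorm p y ≤ ENNReal.ofReal r} := by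
  have hn : (0 : ℝ) < Fintype.card F := by exact_mod_cast Fintype.card_pos
  rw [← Real.volume_pi_closedBall (0 : F → ℝ) (by positivity)]
  refine measure_mono fun y hy => ?_
  rw [mem_closedBall, dist_zero_right, pi_norm_le_iff_of_nonneg (by positivity)] at hy
  simp only [Real.norm_eq_abs] at hy
  rw [mem_ofPred_eq, fintypeLpNorm]
  split_ifs with htop
  · refine iSup_le fun i => ENNReal.ofReal_le_ofReal ?_
    simpa [htop] using hy i
  · have hq : 0 < p.toReal := ENNReal.toReal_pos hp.ne' htop
    set q := p.toReal
    calc (∑ i, ENNReal.ofReal |y i| ^ q) ^ (1 / q)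
        ≤ (∑ _i : F, ENNReal.ofReal (r * (Fintype.card F : ℝ) ^ (-(1 / q))) ^ q) ^ (1 / q) := by
          gcongr with i
          exact hy i
      _ = ENNReal.ofReal r := by
          rw [Finset.sum_const, Finset.card_univ, nsmul_eq_mul,
            ENNReal.ofReal_rpow_of_pos (by positivity), ← ENNReal.ofReal_natCast,
            ← ENNReal.ofReal_mul hn.le, ENNReal.ofReal_rpow_of_pos (by positivity),
            Real.mul_rpow hr.le (by positivity), ← Real.rpow_mul hn.le]
          congr 1
          rw [neg_mul, one_div_mul_cancel hq.ne', Real.rpow_neg_one, mul_left_comm,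
            mul_inv_cancel₀ hn.ne', mul_one, ← Real.rpow_mul hr.le, mul_one_div_cancel hq.ne',
            Real.rpow_one]

/-- Small-ball estimate for the uniform distribution on an `ℓ^p` ball. -/
lemma uniformBallMeasure_sum_sq_sub_le {F : Type*} [Fintype F] [Nonempty F] {p : ℝ≥0∞}
    (hp : 0 < p) {r : ℝ} (hr : 0 < r) (x : F → ℝ) {ε : ℝ} (hε : 0 < ε) :
    uniformBallMeasure p r {z : F → ℝ | ∑ i, (z i - x i) ^ 2 ≤ ε ^ 2} ≤
      ENNReal.ofReal ((Real.exp 1 * √Real.pi / 2 *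
        (Fintype.card F : ℝ) ^ (1 / p.toReal - 1 / 2) * r⁻¹ * ε) ^ Fintype.card F) := by
  have hn : (0 : ℝ) < Fintype.card F := by exact_mod_cast Fintype.card_pos
  rw [uniformBallMeasure, Measure.smul_apply, smul_eq_mul]
  calc _ ≤ (ENNReal.ofReal
        ((2 * (r * (Fintype.card F : ℝ) ^ (-(1 / p.toReal)))) ^ Fintype.card F))⁻¹ *
        ENNReal.ofReal
          ((Real.exp 1 * √Real.pi * (ε / √(Fintype.card F))) ^ Fintype.card F) := by
        gcongr
        · exact le_volume_fintypeLpNorm_le hp hr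
        · exact (Measure.restrict_le_self _).trans (volume_sum_sq_sub_le x hε)
    _ = _ := by
        rw [← ENNReal.ofReal_inv_of_pos (by positivity), ← ENNReal.ofReal_mul (by positivity),
          ← inv_pow, ← mul_pow, Real.rpow_sub hn, Real.rpow_neg hn.le, ← Real.sqrt_eq_rpow]
        congr 2
        field_simp

lemma uniformBallMeasure_univ_le_one {F : Type*} [Fintype F] (p : ℝ≥0∞) (r : ℝ) :
    uniformBallMeasure p r (univ : Set (F → ℝ)) ≤ 1 := by
  simp [uniformBallMeasure, ENNReal.inv_mul_le_one]

/-- A power of an integer is dominated by any growing exponential. -/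
lemma exists_natCast_rpow_le_mul_two_rpow (θ : ℝ) {δ : ℝ} (hδ : 0 < δ) :
    ∃ K : ℝ, 0 < K ∧ ∀ m : ℕ, (m : ℝ) ^ θ ≤ K * 2 ^ (δ * (m : ℝ)) := by
  have hlog : 0 < Real.log 2 * δ := mul_pos (Real.log_pos one_lt_two) hδ
  have h := ((isLittleO_rpow_exp_pos_mul_atTop θ hlog).tendsto_div_nhds_zero.comp
    (tendsto_natCast_atTop_atTop (R := ℝ))).bddAbove_range
  obtain ⟨K, hK⟩ := h
  refine ⟨max K 1, by positivity, fun m => ?_⟩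
  have hm := hK (mem_range_self m)
  simp only [Function.comp_apply] at hm
  rw [Real.rpow_def_of_pos two_pos, ← mul_assoc, ← div_le_iff₀ (Real.exp_pos _)]
  exact hm.trans (le_max_left _ _)

/-- Two-sided bounds on a positive number bound all its real powers. -/
lemma rpow_le_add_mul_rpow {a A n u : ℝ} (ha : 0 < a) (hA : 0 < A) (hu : 0 < u)
    (hl : a * u ≤ n) (hr : n ≤ A * u) (β : ℝ) :
    n ^ β ≤ (a ^ β + A ^ β) * u ^ β := by
  have hn : 0 < n := lt_of_lt_of_le (by positivity) hl
  rw [add_mul, ← Real.mul_rpow ha.le hu.le, ← Real.mul_rpow hA.le hu.le]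
  rcases le_total 0 β with hβ | hβ
  · exact (Real.rpow_le_rpow hn.le hr hβ).trans (le_add_of_nonneg_left (by positivity))
  · exact (Real.rpow_le_rpow_of_nonpos (by positivity) hl hβ).trans
      (le_add_of_nonneg_right (by positivity))

/-- A number beyond `2 ^ σ` lies between consecutive powers `2 ^ (σ m)`, `2 ^ (σ (m + 1))`
with `m ≥ 1`. -/
lemma exists_two_rpow_near {σ T : ℝ} (hσ : 0 < σ) (hT : 2 ^ σ < T) :
    ∃ m : ℕ, 0 < m ∧ 2 ^ (σ * (m : ℝ)) ≤ T ∧ T < 2 ^ (σ * ((m : ℝ) + 1)) := by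
  have h1 : (1 : ℝ) < 2 ^ σ := Real.one_lt_rpow one_lt_two hσ
  obtain ⟨m, hm, hm'⟩ := exists_nat_pow_near (h1.trans hT).le h1
  refine ⟨m, ?_, ?_, ?_⟩
  · rcases Nat.eq_zero_or_pos m with rfl | h
    · simp only [zero_add, pow_one] at hm'
      exact absurd hm' hT.not_gt
    · exact h
  · rwa [Real.rpow_mul two_pos.le, Real.rpow_natCast]
  · rw [Real.rpow_mul two_pos.le]
    exact_mod_cast hm'

/-- The base of the small-ball estimate for the `m`-th block grows at most like `2 ^ (d s m)`. -/
lemma exists_block_base_le {d : ℕ} (hd : 0 < d) {a A : ℝ} (ha : 0 < a) (hA : 0 < A)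
    (α θ γ : ℝ) {s : ℝ} (hs : α / (d : ℝ) - (1 / 2 - γ) < s) :
    ∃ K : ℝ, 0 < K ∧ ∀ (m : ℕ) (n : ℝ), a * 2 ^ (d * m) ≤ n → n ≤ A * 2 ^ (d * m) →
      Real.exp 1 * √Real.pi / 2 * n ^ (γ - 1 / 2) * ((m : ℝ) ^ θ * 2 ^ (α * (m : ℝ))) ≤
        K * 2 ^ ((d : ℝ) * s * (m : ℝ)) := by
  have hd' : (0 : ℝ) < d := by exact_mod_cast hd
  set δ : ℝ := d * (s - (α / d - (1 / 2 - γ))) with hδ_def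
  have hδ : 0 < δ := mul_pos hd' (sub_pos.2 hs)
  obtain ⟨K, hK, hKm⟩ := exists_natCast_rpow_le_mul_two_rpow θ hδ
  refine ⟨Real.exp 1 * √Real.pi / 2 * (a ^ (γ - 1 / 2) + A ^ (γ - 1 / 2)) * K, by positivity,
    fun m n hl hr => ?_⟩
  have hn := rpow_le_add_mul_rpow ha hA (by positivity) hl hr (γ - 1 / 2)
  have hexp : (d : ℝ) * s * m = (d * m : ℝ) * (γ - 1 / 2) + δ * m + α * m := by
    rw [hδ_def]
    field_simp
    ring
  rw [← Real.rpow_natCast, ← Real.rpow_mul two_pos.le, Nat.cast_mul] at hn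
  rw [hexp, Real.rpow_add two_pos, Real.rpow_add two_pos]
  have hn0 : 0 ≤ n := le_trans (by positivity) hl
  calc _ ≤ Real.exp 1 * √Real.pi / 2 *
        ((a ^ (γ - 1 / 2) + A ^ (γ - 1 / 2)) * 2 ^ ((d * m : ℝ) * (γ - 1 / 2))) *
        (K * 2 ^ (δ * (m : ℝ)) * 2 ^ (α * (m : ℝ))) := by
        gcongr
        exact hKm m
    _ = _ := by ring

/-- The infinite-dimensional ball has at most the mass of its projection to a single block. -/
lemma measure_ball_le_uniformBallMeasure {I : Type*} {Pt : ℕ → Finset I} {p : ℝ≥0∞} {R : ℕ → ℝ}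
    {P : Measure (I → ℝ)}
    (hP : ∀ (n : ℕ) (B : (m : ℕ) → Set (↥(Pt m) → ℝ)),
      (∀ m, MeasurableSet (B m)) →
      P {y : I → ℝ | ∀ m : ℕ, 0 < m → m ≤ n → (fun i : ↥(Pt m) => y ↑i) ∈ B m} =
        ∏ m ∈ Finset.Icc 1 n, uniformBallMeasure p (R m) (B m))
    {m : ℕ} (hm : 0 < m) (x : I → ℝ) {ε : ℝ} (hε : 0 < ε) :
    P {y : I → ℝ |
        (∑' i, ENNReal.ofReal ((y i - x i) ^ 2)) ^ ((1 : ℝ) / 2) ≤ ENNReal.ofReal ε} ≤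
      uniformBallMeasure p (R m) {z : ↥(Pt m) → ℝ | ∑ i, (z i - x ↑i) ^ 2 ≤ ε ^ 2} := by
  classical
  let B : (k : ℕ) → Set (↥(Pt k) → ℝ) := fun k =>
    if k = m then {z | ∑ i, (z i - x ↑i) ^ 2 ≤ ε ^ 2} else univ
  have hB : ∀ k, MeasurableSet (B k) := by
    intro k
    by_cases hk : k = m
    · simp only [B, if_pos hk]
      exact measurableSet_le (by fun_prop) measurable_const
    · simp only [B, if_neg hk, MeasurableSet.univ]
  have hBm : B m = {z : ↥(Pt m) → ℝ | ∑ i, (z i - x ↑i) ^ 2 ≤ ε ^ 2} := if_pos rfl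
  calc _ ≤ P {y : I → ℝ | ∀ k : ℕ, 0 < k → k ≤ m → (fun i : ↥(Pt k) => y ↑i) ∈ B k} := by
        refine measure_mono fun y hy k _ _ => ?_
        by_cases hk : k = m
        · simp only [B, if_pos hk, mem_ofPred_eq] at hy ⊢
          rw [one_div, ENNReal.rpow_inv_le_iff two_pos, ENNReal.rpow_two,
            ← ENNReal.ofReal_pow hε.le] at hy
          rw [← ENNReal.ofReal_le_ofReal_iff (by positivity),
            ENNReal.ofReal_sum_of_nonneg fun i _ => sq_nonneg _]
          refine le_trans ?_ hy
          rw [Finset.sum_coe_sort (Pt k) fun i => ENNReal.ofReal ((y i - x i) ^ 2)]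
          exact ENNReal.sum_le_tsum _
        · simp only [B, if_neg hk, mem_univ]
    _ = ∏ k ∈ Finset.Icc 1 m, uniformBallMeasure p (R k) (B k) := hP m B hB
    _ = uniformBallMeasure p (R m) (B m) *
          ∏ k ∈ (Finset.Icc 1 m).erase m, uniformBallMeasure p (R k) (B k) :=
        (Finset.mul_prod_erase _ _ (Finset.mem_Icc.2 ⟨hm, le_rfl⟩)).symm
    _ ≤ uniformBallMeasure p (R m) (B m) * 1 := by
        gcongr
        exact Finset.prod_le_one' fun k _ =>
          (measure_mono (subset_univ _)).trans (uniformBallMeasure_univ_le_one _ _)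
    _ = _ := by rw [mul_one, hBm]

theorem statement12 {I : Type*} [Countable I] [Infinite I]
    (d : ℕ) (hd : 0 < d) (Pt : ℕ → Finset I) (a A : ℝ)
    (hreg : IsRegularPartition d Pt a A)
    (p : ℝ≥0∞) (hp : 0 < p) (α θ : ℝ)
    (hα : (d : ℝ) * max (1 / 2 - 1 / p.toReal) 0 < α)
    (P : Measure (I → ℝ)) [IsProbabilityMeasure P]
    (hP : ∀ (n : ℕ) (B : (m : ℕ) → Set (↥(Pt m) → ℝ)),
      (∀ m, MeasurableSet (B m)) →
      P {y : I → ℝ | ∀ m : ℕ, 0 < m → m ≤ n → (fun i : ↥(Pt m) => y ↑i) ∈ B m} =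
        ∏ m ∈ Finset.Icc 1 n,
          uniformBallMeasure p (((m : ℝ) ^ θ * 2 ^ (α * (m : ℝ)))⁻¹) (B m)) :
    ∀ s : ℝ, α / (d : ℝ) - (1 / 2 - 1 / p.toReal) < s →
      ∃ c ε₀ : ℝ, 0 < c ∧ 0 < ε₀ ∧
        ∀ x : I → ℝ, Memℓp x 2 → ∀ ε : ℝ, 0 < ε → ε < ε₀ →
          MeasurableSet {y : I → ℝ |
              (∑' i, ENNReal.ofReal ((y i - x i) ^ 2)) ^ ((1 : ℝ) / 2) ≤ ENNReal.ofReal ε} ∧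
          P {y : I → ℝ |
              (∑' i, ENNReal.ofReal ((y i - x i) ^ 2)) ^ ((1 : ℝ) / 2) ≤ ENNReal.ofReal ε} ≤
            ENNReal.ofReal ((2 : ℝ) ^ (-(c * ε ^ (-(1 : ℝ) / s)))) := by
  intro s hs
  have hd' : (0 : ℝ) < d := by exact_mod_cast hd
  have ha := hreg.a_pos
  have hs0 : 0 < s := by
    have h1 : max (1 / 2 - 1 / p.toReal) 0 < α / d := by rwa [lt_div_iff₀' hd']
    linarith [le_max_left (1 / 2 - 1 / p.toReal) 0]
  obtain ⟨K, hK, hbase⟩ :=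
    exists_block_base_le hd ha (ha.trans hreg.a_lt_A) α θ (1 / p.toReal) hs
  have hσ : 0 < (d : ℝ) * s := mul_pos hd' hs0
  refine ⟨a * (2 ^ (-(d : ℝ)) * (2 * K) ^ (-(1 : ℝ) / s)), (2 * K * 2 ^ ((d : ℝ) * s))⁻¹,
    by positivity, by positivity, fun x _ ε hε hε0 => ⟨?_, ?_⟩⟩
  · refine measurableSet_le (Measurable.pow_const (Measurable.tsum fun i => ?_) _)
      measurable_const
    fun_prop
  have hT : (2 : ℝ) ^ ((d : ℝ) * s) < (2 * K * ε)⁻¹ := by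
    rw [lt_inv_comm₀ (by positivity) (by positivity)]
    rw [mul_inv, ← div_eq_inv_mul, lt_div_iff₀' (by positivity)] at hε0
    exact hε0
  obtain ⟨m, hm, hmT, hTm⟩ := exists_two_rpow_near hσ hT
  have hcard : a * 2 ^ (d * m) ≤ (Fintype.card ↥(Pt m) : ℝ) := by
    simpa using hreg.card_lower m hm
  have hcard_pos : (0 : ℝ) < Fintype.card ↥(Pt m) := lt_of_lt_of_le (by positivity) hcard
  have : Nonempty ↥(Pt m) := Fintype.card_pos_iff.1 (by exact_mod_cast hcard_pos)
  have hm' : (0 : ℝ) < m := by exact_mod_cast hm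
  have hhalf : Real.exp 1 * √Real.pi / 2 *
      (Fintype.card ↥(Pt m) : ℝ) ^ (1 / p.toReal - 1 / 2) *
      (((m : ℝ) ^ θ * 2 ^ (α * (m : ℝ)))⁻¹)⁻¹ * ε ≤ 2⁻¹ := by
    rw [inv_inv]
    calc _ ≤ K * 2 ^ ((d : ℝ) * s * (m : ℝ)) * ε := by
          refine mul_le_mul_of_nonneg_right ?_ hε.le
          exact hbase m _ hcard (by simpa using hreg.card_upper m hm)
      _ ≤ K * (2 * K * ε)⁻¹ * ε := by gcongr
      _ = 2⁻¹ := by field_simp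
  have hexp : a * (2 ^ (-(d : ℝ)) * (2 * K) ^ (-(1 : ℝ) / s)) * ε ^ (-(1 : ℝ) / s) ≤
      Fintype.card ↥(Pt m) := by
    refine le_trans ?_ hcard
    rw [mul_assoc, mul_assoc, ← Real.mul_rpow (by positivity) hε.le]
    gcongr
    have h := Real.rpow_le_rpow (by positivity) hTm.le (one_div_pos.2 hs0).le
    rw [← Real.rpow_mul two_pos.le, Real.inv_rpow (by positivity),
      ← Real.rpow_neg (by positivity), ← neg_div] at h
    calc _ ≤ (2 : ℝ) ^ (-(d : ℝ)) * 2 ^ ((d : ℝ) * s * ((m : ℝ) + 1) * (1 / s)) := by gcongr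
      _ = 2 ^ (d * m) := by
        rw [← Real.rpow_add two_pos, ← Real.rpow_natCast, Nat.cast_mul]
        congr 1
        field_simp
        ring
  calc _ ≤ uniformBallMeasure p (((m : ℝ) ^ θ * 2 ^ (α * (m : ℝ)))⁻¹)
        {z : ↥(Pt m) → ℝ | ∑ i, (z i - x ↑i) ^ 2 ≤ ε ^ 2} :=
        measure_ball_le_uniformBallMeasure
          (R := fun m : ℕ => ((m : ℝ) ^ θ * 2 ^ (α * (m : ℝ)))⁻¹) hP hm x hε
    _ ≤ _ := uniformBallMeasure_sum_sq_sub_le hp (by positivity) _ hε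
    _ ≤ ENNReal.ofReal ((2⁻¹ : ℝ) ^ Fintype.card ↥(Pt m)) := by gcongr
    _ ≤ _ := by
        refine ENNReal.ofReal_le_ofReal ?_
        rw [inv_pow, ← Real.rpow_natCast, ← Real.rpow_neg two_pos.le]
        exact Real.rpow_le_rpow_of_exponent_le one_le_two (neg_le_neg hexp)
end
end

section
/- Let X be a real Banach space and let S ⊆ X be nonempty, closed, bounded, and convex, and suppose s* := s*(S, X) < ∞. Then for every codec C = (E_R, D_R)_{R∈ℕ} for S there exists x ∈ S such that for every ℓ ∈ ℕ the set {R ∈ ℕ : ‖x − D_R(E_R(x))‖ ≥ R^{−(s* + 1/ℓ)}} is infinite. -/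
open MeasureTheory Metric Set ENNReal

noncomputable section

variable {X : Type*}

/-- The points of `S` that, for every code-length `R ≥ N`, lie within `R ^ (-s)` of some codeword
of the decoder `D`. -/
def codewordNbhd [NormedAddCommGroup X] (S : Set X) (D : (R : ℕ) → (Fin R → Bool) → X)
    (s : ℝ) (N : ℕ) : Set S :=
  {x : S | ∀ R : ℕ, N ≤ R → 0 < R → ∃ c : Fin R → Bool, ‖(x : X) - D R c‖ ≤ (R : ℝ) ^ (-s)}

theorem isClosed_codewordNbhd [NormedAddCommGroup X] (S : Set X)
    (D : (R : ℕ) → (Fin R → Bool) → X) (s : ℝ) (N : ℕ) :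
    IsClosed (codewordNbhd S D s N) := by
  simp only [codewordNbhd, ofPred_forall, ofPred_exists]
  refine isClosed_iInter fun R => isClosed_iInter fun _ => isClosed_iInter fun _ =>
    isClosed_iUnion_of_finite fun c => isClosed_le ?_ continuous_const
  fun_prop

/-- A bounded set each of whose points is within `K * R ^ (-s)` of one of `2 ^ R` codewords, for all
large `R`, is compressible at rate `s`. -/
theorem compressibleAt_of_eventually_near_codeword [NormedAddCommGroup X] {S : Set X}
    (hbdd : Bornology.IsBounded S) (D : (R : ℕ) → (Fin R → Bool) → X) (s K : ℝ) (N : ℕ)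
    (h : ∀ R : ℕ, N ≤ R → 0 < R → ∀ x ∈ S, ∃ c : Fin R → Bool,
      ‖x - D R c‖ ≤ K * (R : ℝ) ^ (-s)) :
    CompressibleAt S s := by
  classical
  obtain ⟨M, hM⟩ := hbdd.exists_norm_le
  have hcode : ∀ (R : ℕ) (x : S), ∃ c : Fin R → Bool,
      N ≤ R → 0 < R → ‖(x : X) - D R c‖ ≤ K * (R : ℝ) ^ (-s) := by
    intro R x
    by_cases hR : N ≤ R ∧ 0 < R
    · obtain ⟨c, hc⟩ := h R hR.1 hR.2 x x.2
      exact ⟨c, fun _ _ => hc⟩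
    · exact ⟨fun _ => false, fun h₁ h₂ => absurd ⟨h₁, h₂⟩ hR⟩
  choose E hE using hcode
  refine ⟨E, fun R c => if N ≤ R then D R c else 0,
    |K| + ∑ R ∈ Finset.range N, (R : ℝ) ^ s * |M|, fun R hR x => ?_⟩
  have hpow : 0 < (R : ℝ) ^ s := Real.rpow_pos_of_pos (by exact_mod_cast hR) s
  have hterm : ∀ R ∈ Finset.range N, 0 ≤ (R : ℝ) ^ s * |M| := fun R _ => by positivity
  by_cases hNR : N ≤ R
  · have hx := mul_le_mul_of_nonneg_left (hE R x hNR hR) hpow.le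
    have hcancel : (R : ℝ) ^ s * (K * (R : ℝ) ^ (-s)) = K := by
      rw [Real.rpow_neg (Nat.cast_nonneg R)]
      field_simp
    simp only [hNR, if_true]
    linarith [le_abs_self K, Finset.sum_nonneg hterm]
  · have hx : (R : ℝ) ^ s * ‖(x : X)‖ ≤ (R : ℝ) ^ s * |M| :=
      mul_le_mul_of_nonneg_left ((hM x x.2).trans (le_abs_self M)) hpow.le
    have hsum := Finset.single_le_sum hterm (Finset.mem_range.2 (not_le.1 hNR))
    simp only [hNR, if_false, sub_zero]
    linarith [abs_nonneg K]

/-- If a bounded convex set has a relatively open piece near the codewords of `D` at rate `s`, then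
rescaling this piece to the whole set shows compressibility at rate `s`. -/
theorem compressibleAt_of_interior_codewordNbhd_nonempty [NormedAddCommGroup X] [NormedSpace ℝ X]
    {S : Set X} (hbdd : Bornology.IsBounded S) (hconv : Convex ℝ S)
    (D : (R : ℕ) → (Fin R → Bool) → X) (s : ℝ) (N : ℕ)
    (h : (interior (codewordNbhd S D s N)).Nonempty) :
    CompressibleAt S s := by
  obtain ⟨x₀, hx₀⟩ := h
  obtain ⟨r, hr, hball⟩ := Metric.mem_nhds_iff.1 (mem_interior_iff_mem_nhds.1 hx₀)
  obtain ⟨M, hM⟩ := hbdd.exists_norm_le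
  have hM₀ : 0 ≤ M := (norm_nonneg _).trans (hM x₀ x₀.2)
  set t : ℝ := r / (r + 2 * M + 1) with ht
  have ht₀ : 0 < t := by positivity
  have ht₁ : t ≤ 1 := by
    rw [ht, div_le_one (by positivity)]
    linarith
  have htr : t * (2 * M) < r := by
    rw [ht, div_mul_eq_mul_div, div_lt_iff₀ (by positivity)]
    nlinarith
  refine compressibleAt_of_eventually_near_codeword hbdd
    (fun R c => (x₀ : X) + t⁻¹ • (D R c - x₀)) s t⁻¹ N fun R hNR hR x hx => ?_
  have hmem : (x₀ : X) + t • (x - x₀) ∈ S := hconv.add_smul_sub_mem x₀.2 hx ⟨ht₀.le, ht₁⟩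
  have hnear : (⟨(x₀ : X) + t • (x - x₀), hmem⟩ : S) ∈ Metric.ball x₀ r := by
    rw [Metric.mem_ball, Subtype.dist_eq, dist_eq_norm, add_sub_cancel_left, norm_smul,
      Real.norm_of_nonneg ht₀.le]
    refine lt_of_le_of_lt (mul_le_mul_of_nonneg_left ?_ ht₀.le) htr
    linarith [norm_sub_le x (x₀ : X), hM x hx, hM x₀ x₀.2]
  obtain ⟨c, hc⟩ := hball hnear R hNR hR
  refine ⟨c, ?_⟩
  have hscale : x - ((x₀ : X) + t⁻¹ • (D R c - x₀)) =
      t⁻¹ • ((x₀ : X) + t • (x - x₀) - D R c) := by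
    have hx' : x - x₀ = t⁻¹ • t • (x - (x₀ : X)) := (inv_smul_smul₀ ht₀.ne' _).symm
    rw [← sub_sub, hx', ← smul_sub, inv_smul_smul₀ ht₀.ne']
    congr 1
    abel
  rw [hscale, norm_smul, Real.norm_of_nonneg (inv_nonneg.2 ht₀.le)]
  exact mul_le_mul_of_nonneg_left hc (inv_nonneg.2 ht₀.le)

theorem le_of_compressibleAt_of_optRate_eq [NormedAddCommGroup X] {S : Set X} {sStar s : ℝ}
    (hsStar : 0 ≤ sStar) (hopt : optRate S = ENNReal.ofReal sStar) (hs : 0 ≤ s)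
    (h : CompressibleAt S s) : s ≤ sStar := by
  rw [← ENNReal.ofReal_le_ofReal_iff hsStar, ← hopt]
  exact le_sSup ⟨s, ⟨hs, h⟩, rfl⟩

theorem statement15 {X : Type*} [NormedAddCommGroup X] [NormedSpace ℝ X] [CompleteSpace X]
    (S : Set X) (hne : S.Nonempty) (hclosed : IsClosed S)
    (hbdd : Bornology.IsBounded S) (hconv : Convex ℝ S)
    (sStar : ℝ) (hsStar : 0 ≤ sStar) (hopt : optRate S = ENNReal.ofReal sStar)
    (E : (R : ℕ) → S → (Fin R → Bool)) (D : (R : ℕ) → (Fin R → Bool) → X) :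
    ∃ x : S, ∀ ℓ : ℕ, 0 < ℓ →
      {R : ℕ | 0 < R ∧ (R : ℝ) ^ (-(sStar + 1 / (ℓ : ℝ))) ≤ ‖(x : X) - D R (E R x)‖}.Infinite := by
  by_contra! hcon
  have : CompleteSpace S := hclosed.completeSpace_coe
  have : Nonempty S := hne.to_subtype
  have hcover : ⋃ p : {ℓ : ℕ // 0 < ℓ} × ℕ,
      codewordNbhd S D (sStar + 1 / ((p.1 : ℕ) : ℝ)) p.2 = univ := by
    refine eq_univ_of_forall fun x => ?_
    obtain ⟨ℓ, hℓ, hfin⟩ := hcon x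
    obtain ⟨N, hN⟩ := hfin.bddAbove
    refine mem_iUnion.2 ⟨(⟨ℓ, hℓ⟩, N + 1), fun R hNR hR => ⟨E R x, ?_⟩⟩
    by_contra! hlt
    have := hN (show R ∈ _ from ⟨hR, hlt.le⟩)
    omega
  obtain ⟨⟨⟨ℓ, hℓ⟩, N⟩, hint⟩ := nonempty_interior_of_iUnion_of_closed
    (fun p => isClosed_codewordNbhd S D _ _) hcover
  have hinv : 0 < 1 / (ℓ : ℝ) := by positivity
  have hle := le_of_compressibleAt_of_optRate_eq hsStar hopt (by positivity)
    (compressibleAt_of_interior_codewordNbhd_nonempty hbdd hconv D _ N hint)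
  linarith
end
end

section
/- Let X be a real Banach space, S ⊆ X, and suppose s* := s*(S, X) < ∞. Let P be a Borel probability measure on S of growth order s*. Then for every codec C = (E_R, D_R)_{R∈ℕ} for S, the set S \ ⋃_{s > s*} A^s(C), i.e., the set of all x ∈ S such that sup_{R∈ℕ} R^s·‖x − D_R(E_R(x))‖ = ∞ for every s > s*, is uncountable. -/
open MeasureTheory Metric Set ENNReal

noncomputable section

variable {X : Type*}

open Filter Topology

/-- For `1 < γ` and `0 < c`, the quantity `2 ^ (R - c R ^ γ)` vanishes as `R → ∞`. -/
theorem tendsto_two_rpow_sub_rpow {γ c : ℝ} (hγ : 1 < γ) (hc : 0 < c) :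
    Tendsto (fun R : ℕ => (2 : ℝ) ^ ((R : ℝ) - c * (R : ℝ) ^ γ)) atTop (𝓝 0) := by
  refine (tendsto_rpow_atBot_of_base_gt_one 2 one_lt_two).comp ?_
  have hpow : Tendsto (fun x : ℝ => x ^ (γ - 1)) atTop atTop :=
    tendsto_rpow_atTop (by linarith)
  have hfactor : Tendsto (fun x : ℝ => 1 + -(c * x ^ (γ - 1))) atTop atBot :=
    tendsto_atBot_add_const_left _ _ (tendsto_neg_atTop_atBot.comp (hpow.const_mul_atTop hc))
  have hreal : Tendsto (fun x : ℝ => x - c * x ^ γ) atTop atBot := by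
    refine (tendsto_id.atTop_mul_atBot₀ hfactor).congr' ?_
    filter_upwards [eventually_gt_atTop 0] with x hx
    have hsplit : x ^ γ = x * x ^ (γ - 1) := by
      rw [Real.rpow_sub_one hx.ne']
      field_simp
    rw [hsplit, id]
    ring
  exact hreal.comp tendsto_natCast_atTop_atTop

/-- A set all of whose points are approximated at rate `s` with a common constant by one codec is
null for every measure of growth order `s₀ < s`. -/
theorem HasGrowthOrder.measure_eq_zero_of_uniform_bound {X : Type*} [NormedAddCommGroup X]
    [MeasurableSpace X] {S : Set X} {P : Measure S} {s₀ s : ℝ} (hP : HasGrowthOrder S P s₀)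
    (hs₀ : 0 ≤ s₀) (hs : s₀ < s)
    (E : (R : ℕ) → S → (Fin R → Bool)) (D : (R : ℕ) → (Fin R → Bool) → X)
    {K : ℝ} (hK : 0 < K) {A : Set S}
    (hA : ∀ x ∈ A, ∀ R : ℕ, 0 < R → (R : ℝ) ^ s * ‖(x : X) - D R (E R x)‖ ≤ K) :
    P A = 0 := by
  obtain ⟨t, hst, hts⟩ := exists_between hs
  have ht : 0 < t := hs₀.trans_lt hst
  obtain ⟨ε₀, c, hε₀, hc, hball⟩ := hP t hst
  have hradius : Tendsto (fun R : ℕ => K * (R : ℝ) ^ (-s)) atTop (𝓝 0) := by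
    simpa using ((tendsto_rpow_neg_atTop (ht.trans hts)).comp
      tendsto_natCast_atTop_atTop).const_mul K
  have hlim := ENNReal.tendsto_ofReal (tendsto_two_rpow_sub_rpow
    ((one_lt_div ht).2 hts) (mul_pos hc (Real.rpow_pos_of_pos hK (-(1 : ℝ) / t))))
  rw [ENNReal.ofReal_zero] at hlim
  refine le_antisymm (ge_of_tendsto hlim ?_) zero_le
  filter_upwards [hradius.eventually_lt_const hε₀, eventually_gt_atTop 0] with R hR hR0
  have hRpos : (0 : ℝ) < R := Nat.cast_pos.2 hR0
  have hcover : A ⊆ ⋃ b : Fin R → Bool,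
      {y : S | (y : X) ∈ closedBall (D R b) (K * (R : ℝ) ^ (-s))} := by
    intro x hx
    refine mem_iUnion.2 ⟨E R x, ?_⟩
    rw [mem_ofPred_eq, mem_closedBall, dist_eq_norm, Real.rpow_neg hRpos.le, ← div_eq_mul_inv,
      le_div_iff₀' (Real.rpow_pos_of_pos hRpos s)]
    exact hA x hx R hR0
  have hexp : (K * (R : ℝ) ^ (-s)) ^ (-(1 : ℝ) / t)
      = K ^ (-(1 : ℝ) / t) * (R : ℝ) ^ (s / t) := by
    rw [Real.mul_rpow hK.le (Real.rpow_nonneg hRpos.le _), ← Real.rpow_mul hRpos.le]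
    congr 2
    ring
  calc P A ≤ ∑ b : Fin R → Bool,
        P {y : S | (y : X) ∈ closedBall (D R b) (K * (R : ℝ) ^ (-s))} :=
        (measure_mono hcover).trans (measure_iUnion_fintype_le _ _)
    _ ≤ ∑ _b : Fin R → Bool,
        ENNReal.ofReal ((2 : ℝ) ^ (-(c * (K * (R : ℝ) ^ (-s)) ^ (-(1 : ℝ) / t)))) :=
        Finset.sum_le_sum fun b _ =>
          hball _ _ (mul_pos hK (Real.rpow_pos_of_pos hRpos _)) hR
    _ = ENNReal.ofReal ((2 : ℝ) ^ ((R : ℝ) - c * K ^ (-(1 : ℝ) / t) * (R : ℝ) ^ (s / t))) := by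
        rw [← ENNReal.ofReal_sum_of_nonneg fun _ _ => by positivity, hexp, sub_eq_add_neg,
          Real.rpow_add two_pos, Real.rpow_natCast]
        simp [mul_assoc]

/-- Approximation classes of rate `s > s₀` are null for every measure of growth order `s₀`. -/
theorem HasGrowthOrder.measure_approxClass {X : Type*} [NormedAddCommGroup X]
    [MeasurableSpace X] {S : Set X} {P : Measure S} {s₀ s : ℝ} (hP : HasGrowthOrder S P s₀)
    (hs₀ : 0 ≤ s₀) (hs : s₀ < s)
    (E : (R : ℕ) → S → (Fin R → Bool)) (D : (R : ℕ) → (Fin R → Bool) → X) :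
    P (approxClass S E D s) = 0 := by
  have hcover : approxClass S E D s ⊆ ⋃ N : ℕ, {x : S | ∀ R : ℕ, 0 < R →
      (R : ℝ) ^ s * ‖(x : X) - D R (E R x)‖ ≤ (N : ℝ) + 1} := by
    rintro x ⟨K, hK⟩
    obtain ⟨N, hN⟩ := exists_nat_ge K
    exact mem_iUnion.2 ⟨N, fun R hR => (hK R hR).trans (by linarith)⟩
  exact measure_mono_null hcover <| measure_iUnion_null fun N =>
    hP.measure_eq_zero_of_uniform_bound hs₀ hs E D (by positivity) fun _ hx => hx

/-- Approximation classes decrease as the rate grows. -/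
theorem approxClass_antitone {X : Type*} [NormedAddCommGroup X] (S : Set X)
    (E : (R : ℕ) → S → (Fin R → Bool)) (D : (R : ℕ) → (Fin R → Bool) → X) :
    Antitone (approxClass S E D) := by
  rintro s t hst x ⟨K, hK⟩
  refine ⟨K, fun R hR => le_trans ?_ (hK R hR)⟩
  gcongr
  exact Nat.one_le_cast.2 hR

theorem statement17 {X : Type*} [NormedAddCommGroup X] [NormedSpace ℝ X] [CompleteSpace X]
    [MeasurableSpace X] [BorelSpace X]
    (S : Set X) (sStar : ℝ) (hsStar : 0 ≤ sStar)
    (hopt : optRate S = ENNReal.ofReal sStar)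
    (P : Measure S) [IsProbabilityMeasure P] (hP : HasGrowthOrder S P sStar)
    (E : (R : ℕ) → S → (Fin R → Bool)) (D : (R : ℕ) → (Fin R → Bool) → X) :
    ¬ ({x : S | ∀ s : ℝ, sStar < s → x ∉ approxClass S E D s}).Countable := by
  intro hcount
  have hsingle : ∀ x : S, P {x} = 0 := fun x =>
    hP.measure_eq_zero_of_uniform_bound hsStar (lt_add_one sStar) E (fun _ _ => (x : X)) one_pos
      fun y hy R _ => by simp [mem_singleton_iff.1 hy]
  have hexceptional : P {x : S | ∀ s : ℝ, sStar < s → x ∉ approxClass S E D s} = 0 := by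
    rw [← biUnion_of_singleton {x : S | ∀ s : ℝ, sStar < s → x ∉ approxClass S E D s}]
    exact (measure_biUnion_null_iff hcount).2 fun x _ => hsingle x
  have hclasses : P (⋃ n : ℕ, approxClass S E D (sStar + 1 / ((n : ℝ) + 1))) = 0 :=
    measure_iUnion_null fun n =>
      hP.measure_approxClass hsStar (lt_add_of_pos_right _ Nat.one_div_pos_of_nat) E D
  have hcover : (univ : Set S) ⊆ {x : S | ∀ s : ℝ, sStar < s → x ∉ approxClass S E D s} ∪
      ⋃ n : ℕ, approxClass S E D (sStar + 1 / ((n : ℝ) + 1)) := by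
    intro x _
    by_cases hx : ∀ s : ℝ, sStar < s → x ∉ approxClass S E D s
    · exact Or.inl hx
    · push Not at hx
      obtain ⟨s, hs, hxs⟩ := hx
      obtain ⟨n, hn⟩ := exists_nat_one_div_lt (sub_pos.2 hs)
      exact Or.inr (mem_iUnion.2 ⟨n, approxClass_antitone S E D (by linarith) hxs⟩)
  have hzero : P univ = 0 := measure_mono_null hcover (measure_union_null hexceptional hclasses)
  exact one_ne_zero (measure_univ.symm.trans hzero)
end
end

section
/- Fix s > 0, and in the real Hilbert space H := ℓ²(ℕ) with standard orthonormal basis (e_n)_{n∈ℕ}, let x_0 := 0 and x_n := (log₂(n+1))^{−s}·e_n for n ∈ ℕ, and set S := {x_n : n ∈ ℕ₀}. Then: (a) the optimal compression rate of S satisfies s*(S, H) = s; yet (b) there exists a single codec C = (E_R, D_R)_{R∈ℕ} for S such that for every σ > 0 and every x ∈ S one has sup_{R∈ℕ} R^σ·‖x − D_R(E_R(x))‖ < ∞, i.e., A^σ(C) = S for every σ > 0. -/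
open MeasureTheory Metric Set ENNReal

noncomputable section

variable {X : Type*}

/-- The sequence `x_0 = 0`, `x_n = (log₂(n+1))^(-s) · e_n` for `n ≥ 1`,
viewed in the Hilbert space `H = ℓ²(ℕ)`. -/
def xseq (s : ℝ) (n : ℕ) : lp (fun _ : ℕ => ℝ) 2 :=
  if n = 0 then 0 else (Real.logb 2 ((n : ℝ) + 1)) ^ (-s) • lp.single 2 n (1 : ℝ)

lemma logb_two_natCast_add_one_pos {n : ℕ} (hn : n ≠ 0) : 0 < Real.logb 2 ((n : ℝ) + 1) :=
  Real.logb_pos one_lt_two (lt_add_of_pos_left 1 (by positivity))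

lemma xseq_apply_self (s : ℝ) {n : ℕ} (hn : n ≠ 0) :
    xseq s n n = Real.logb 2 ((n : ℝ) + 1) ^ (-s) := by
  simp [xseq, hn]

lemma xseq_apply_of_ne (s : ℝ) {m n : ℕ} (h : n ≠ m) : xseq s m n = 0 := by
  unfold xseq
  split_ifs
  · rfl
  · simp [Pi.single_eq_of_ne h]

lemma norm_xseq (s : ℝ) {n : ℕ} (hn : n ≠ 0) :
    ‖xseq s n‖ = Real.logb 2 ((n : ℝ) + 1) ^ (-s) := by
  have h := logb_two_natCast_add_one_pos hn
  rw [xseq, if_neg hn, norm_smul, lp.norm_single (by norm_num), norm_one, mul_one,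
    Real.norm_of_nonneg (by positivity)]

lemma rpow_mul_norm_xseq_le {s : ℝ} (hs : 0 < s) {R n : ℕ} (h : 2 ^ R ≤ n) :
    (R : ℝ) ^ s * ‖xseq s n‖ ≤ 1 := by
  have hn : n ≠ 0 := (lt_of_lt_of_le (by positivity) h).ne'
  have hlog := logb_two_natCast_add_one_pos hn
  have hR : (R : ℝ) ≤ Real.logb 2 ((n : ℝ) + 1) := by
    rw [Real.le_logb_iff_rpow_le one_lt_two (by positivity), Real.rpow_natCast]
    have : (2 : ℝ) ^ R ≤ n := by exact_mod_cast h
    linarith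
  rw [norm_xseq s hn, Real.rpow_neg hlog.le, ← div_eq_mul_inv, div_le_one (by positivity)]
  exact Real.rpow_le_rpow (by positivity) hR hs.le

lemma le_norm_xseq_sub_xseq {s : ℝ} (hs : 0 < s) {R i j : ℕ} (hR : 0 < R) (hij : i < j)
    (hj : j ≤ 2 ^ R) : (2 * (R : ℝ)) ^ (-s) ≤ ‖xseq s i - xseq s j‖ := by
  have hj0 : j ≠ 0 := by omega
  have hlog := logb_two_natCast_add_one_pos hj0
  have hR1 : (1 : ℝ) ≤ R := by exact_mod_cast hR
  have hle : Real.logb 2 ((j : ℝ) + 1) ≤ 2 * R := by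
    rw [Real.logb_le_iff_le_rpow one_lt_two (by positivity)]
    calc (j : ℝ) + 1 ≤ 2 ^ R + 2 ^ R :=
          add_le_add (by exact_mod_cast hj) (one_le_pow₀ one_le_two)
      _ = 2 ^ ((R : ℝ) + 1) := by
          rw [Real.rpow_add_one two_ne_zero, Real.rpow_natCast]; ring
      _ ≤ 2 ^ (2 * (R : ℝ)) := Real.rpow_le_rpow_of_exponent_le one_le_two (by linarith)
  calc (2 * (R : ℝ)) ^ (-s) ≤ Real.logb 2 ((j : ℝ) + 1) ^ (-s) :=
        Real.rpow_le_rpow_of_nonpos hlog hle (by linarith)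
    _ = ‖(xseq s i - xseq s j) j‖ := by
        rw [lp.coeFn_sub, Pi.sub_apply, xseq_apply_of_ne s hij.ne', xseq_apply_self s hj0,
          zero_sub, norm_neg, Real.norm_of_nonneg (by positivity)]
    _ ≤ ‖xseq s i - xseq s j‖ := lp.norm_apply_le_norm two_ne_zero _ _

/-- No compression rate above `s` is achievable: among the first `2 ^ R + 1` points two share
a code word of length `R`. -/
lemma le_of_compressibleAt_range_xseq {s σ : ℝ} (hs : 0 < s)
    (h : CompressibleAt (Set.range (xseq s)) σ) : σ ≤ s := by
  obtain ⟨E, D, K, hK⟩ := h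
  by_contra! hσ
  have key : ∀ R : ℕ, 0 < R → (R : ℝ) ^ (σ - s) ≤ 2 ^ s * (2 * K) := by
    intro R hR
    have hR0 : (0 : ℝ) < R := by exact_mod_cast hR
    obtain ⟨i, j, hne, heq⟩ := Fintype.exists_ne_map_eq_of_card_lt
      (fun k : Fin (2 ^ R + 1) => E R ⟨xseq s k, Set.mem_range_self _⟩) (by simp)
    wlog hij : i < j generalizing i j
    · exact this j i hne.symm heq.symm (lt_of_le_of_ne (not_lt.mp hij) hne.symm)
    have hi := hK R hR ⟨xseq s i, Set.mem_range_self _⟩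
    have hj := hK R hR ⟨xseq s j, Set.mem_range_self _⟩
    simp only at heq hi hj
    rw [heq] at hi
    have hdist : (R : ℝ) ^ σ * ‖xseq s i - xseq s j‖ ≤ 2 * K := by
      have htri := norm_sub_le_norm_sub_add_norm_sub (xseq s i)
        (D R (E R ⟨xseq s j, Set.mem_range_self _⟩)) (xseq s j)
      rw [norm_sub_rev (D R _) (xseq s j)] at htri
      have := mul_le_mul_of_nonneg_left htri (Real.rpow_nonneg hR0.le σ)
      linarith
    have hlow := le_norm_xseq_sub_xseq hs hR (i := i) (j := j) hij (by omega)
    calc (R : ℝ) ^ (σ - s) = 2 ^ s * ((R : ℝ) ^ σ * (2 * (R : ℝ)) ^ (-s)) := by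
          rw [Real.mul_rpow zero_le_two hR0.le, Real.rpow_sub hR0, Real.rpow_neg zero_le_two,
            Real.rpow_neg hR0.le]
          field_simp
      _ ≤ 2 ^ s * (2 * K) := by
          refine mul_le_mul_of_nonneg_left ?_ (by positivity)
          exact (mul_le_mul_of_nonneg_left hlow (by positivity)).trans hdist
  have hlim := (tendsto_rpow_atTop (sub_pos.mpr hσ)).comp (tendsto_natCast_atTop_atTop (R := ℝ))
  obtain ⟨R, hR, hR0⟩ := ((hlim.eventually_gt_atTop (2 ^ s * (2 * K))).and
    (Filter.eventually_gt_atTop 0)).exists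
  exact (key R hR0).not_gt hR

/-- A bijection between bit strings of length `R` and the natural numbers below `2 ^ R`. -/
def bitsEquivFin (R : ℕ) : (Fin R → Bool) ≃ Fin (2 ^ R) :=
  Fintype.equivFinOfCardEq (by simp)

/-- An index of a point of the range of `xseq s`. -/
def xseqIndex (s : ℝ) (x : Set.range (xseq s)) : ℕ := x.2.choose

lemma xseq_xseqIndex (s : ℝ) (x : Set.range (xseq s)) : xseq s (xseqIndex s x) = x :=
  x.2.choose_spec

/-- The encoder storing the index of a point if it is below `2 ^ R`, and the index `0` otherwise. -/
def indexEncoder (s : ℝ) (R : ℕ) (x : Set.range (xseq s)) : Fin R → Bool :=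
  (bitsEquivFin R).symm
    (if h : xseqIndex s x < 2 ^ R then ⟨xseqIndex s x, h⟩ else ⟨0, by positivity⟩)

/-- The decoder returning the point with the stored index. -/
def indexDecoder (s : ℝ) (R : ℕ) (b : Fin R → Bool) : lp (fun _ : ℕ => ℝ) 2 :=
  xseq s (bitsEquivFin R b)

lemma sub_indexDecoder_indexEncoder (s : ℝ) (R : ℕ) (x : Set.range (xseq s)) :
    (x : lp (fun _ : ℕ => ℝ) 2) - indexDecoder s R (indexEncoder s R x) =
      if xseqIndex s x < 2 ^ R then 0 else xseq s (xseqIndex s x) := by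
  unfold indexDecoder indexEncoder
  rw [Equiv.apply_symm_apply]
  split_ifs
  · simp [xseq_xseqIndex]
  · rw [xseq_xseqIndex]
    simp [xseq]

lemma compressibleAt_range_xseq {s : ℝ} (hs : 0 < s) :
    CompressibleAt (Set.range (xseq s)) s := by
  refine ⟨indexEncoder s, indexDecoder s, 1, fun R _ x => ?_⟩
  rw [sub_indexDecoder_indexEncoder]
  split_ifs with h
  · simp
  · exact rpow_mul_norm_xseq_le hs (not_lt.mp h)

lemma approxClass_indexEncoder_indexDecoder (s : ℝ) {σ : ℝ} (hσ : 0 < σ) :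
    approxClass (Set.range (xseq s)) (indexEncoder s) (indexDecoder s) σ = Set.univ := by
  refine Set.eq_univ_of_forall fun x =>
    ⟨(xseqIndex s x : ℝ) ^ σ * ‖xseq s (xseqIndex s x)‖, fun R _ => ?_⟩
  rw [sub_indexDecoder_indexEncoder]
  split_ifs with h
  · rw [norm_zero, mul_zero]
    positivity
  · have hR : R ≤ xseqIndex s x := R.lt_two_pow_self.le.trans (not_lt.mp h)
    gcongr

theorem statement18 (s : ℝ) (hs : 0 < s) :
    optRate (Set.range (xseq s)) = ENNReal.ofReal s ∧
    ∃ (E : (R : ℕ) → (Set.range (xseq s)) → (Fin R → Bool))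
      (D : (R : ℕ) → (Fin R → Bool) → lp (fun _ : ℕ => ℝ) 2),
      ∀ σ : ℝ, 0 < σ → approxClass (Set.range (xseq s)) E D σ = Set.univ := by
  refine ⟨le_antisymm (sSup_le ?_) (le_sSup ?_), indexEncoder s, indexDecoder s,
    fun σ hσ => approxClass_indexEncoder_indexDecoder s hσ⟩
  · rintro _ ⟨σ, ⟨-, hσ⟩, rfl⟩
    exact ENNReal.ofReal_le_ofReal (le_of_compressibleAt_range_xseq hs hσ)
  · exact ⟨s, ⟨hs.le, compressibleAt_range_xseq hs⟩, rfl⟩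
end
end

section
/- Let d ∈ ℕ, let Ω ⊆ ℝ^d be measurable, let ρ : ℝ → ℝ be measurable with ρ(0) = 0, and let σ ∈ ℕ. Then there exists a codec C = (E_R, D_R)_{R∈ℕ} for L²(Ω) (in the Banach space L²(Ω)), depending only on d, Ω, ρ, σ, with the following property: for every τ > 0, every δ ∈ (0, 1/τ), and every f ∈ L²(Ω) for which there exists K > 0 with W_ε^{σ,ρ}(f) ≤ K·ε^{−τ} for all ε ∈ (0,1), one has sup_{R∈ℕ} R^{1/τ − δ}·‖f − D_R(E_R(f))‖_{L²(Ω)} < ∞. -/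
open MeasureTheory ENNReal

noncomputable section

/-- A (fully connected feed-forward) neural network with `L` layers and architecture
`N 0, N 1, …, N L` (the data `A ℓ, b ℓ, N ℓ` for `ℓ` beyond the `L` used layers is
irrelevant: it enters neither the realization nor the weight count). -/
structure NeuralNet where
  L : ℕ
  N : ℕ → ℕ
  A : (ℓ : ℕ) → Matrix (Fin (N (ℓ + 1))) (Fin (N ℓ)) ℝ
  b : (ℓ : ℕ) → Fin (N (ℓ + 1)) → ℝ

namespace NeuralNet

/-- The intermediate values `x^(ℓ)` of the forward pass (activation applied after
each affine map). -/
def hidden (ρ : ℝ → ℝ) (Φ : NeuralNet) : (ℓ : ℕ) → (Fin (Φ.N 0) → ℝ) → (Fin (Φ.N ℓ) → ℝ)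
  | 0, x => x
  | ℓ + 1, x => fun i => ρ ((Φ.A ℓ).mulVec (Φ.hidden ρ ℓ x) i + Φ.b ℓ i)

/-- The realization `R_ρ Φ` of the network: the last layer is affine, with no
activation (meaningful when `0 < Φ.L`). -/
def realize (ρ : ℝ → ℝ) (Φ : NeuralNet) (x : Fin (Φ.N 0) → ℝ) :
    Fin (Φ.N (Φ.L - 1 + 1)) → ℝ :=
  fun i => (Φ.A (Φ.L - 1)).mulVec (Φ.hidden ρ (Φ.L - 1) x) i + Φ.b (Φ.L - 1) i

open Classical in
/-- `W(Φ)`: the number of nonzero entries of the matrices `A ℓ` and vectors `b ℓ`. -/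
def weights (Φ : NeuralNet) : ℕ :=
  ∑ ℓ ∈ Finset.range Φ.L,
    ((((Finset.univ : Finset (Fin (Φ.N (ℓ + 1)) × Fin (Φ.N ℓ))).filter
        fun ij => Φ.A ℓ ij.1 ij.2 ≠ 0).card) +
      (((Finset.univ : Finset (Fin (Φ.N (ℓ + 1)))).filter fun i => Φ.b ℓ i ≠ 0).card))

/-- `Φ` is `(σ, W)`-quantized: all entries of the matrices and bias vectors belong to
`[-W^(σ⌈log₂ W⌉), W^(σ⌈log₂ W⌉)] ∩ 2^(-σ⌈log₂ W⌉²) ℤ`. -/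
def IsQuantized (σ W : ℕ) (Φ : NeuralNet) : Prop :=
  ∀ ℓ < Φ.L,
    (∀ i j, |Φ.A ℓ i j| ≤ (W : ℝ) ^ (σ * Nat.clog 2 W) ∧
      ∃ k : ℤ, Φ.A ℓ i j = (k : ℝ) * 2 ^ (-(σ * (Nat.clog 2 W) ^ 2 : ℤ))) ∧
    (∀ i, |Φ.b ℓ i| ≤ (W : ℝ) ^ (σ * Nat.clog 2 W) ∧
      ∃ k : ℤ, Φ.b ℓ i = (k : ℝ) * 2 ^ (-(σ * (Nat.clog 2 W) ^ 2 : ℤ)))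

end NeuralNet

/-- The class `NN_{d,W}^{σ,ρ}` of functions `ℝ^d → ℝ` computed by `(σ, W)`-quantized
networks with at most `W` nonzero weights, input dimension `d` and output dimension `1`. -/
def NNclass (ρ : ℝ → ℝ) (d σ W : ℕ) : Set ((Fin d → ℝ) → ℝ) :=
  {f | ∃ (Φ : NeuralNet) (_ : 0 < Φ.L) (hin : Φ.N 0 = d)
        (hout : Φ.N (Φ.L - 1 + 1) = 1),
        Φ.weights ≤ W ∧ Φ.IsQuantized σ W ∧
        ∀ x : Fin d → ℝ,
          f x = Φ.realize ρ (fun j => x (Fin.cast hin j)) ⟨0, by omega⟩}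

/-- `W_ε^{σ,ρ}(f) ∈ ℕ ∪ {∞}`: the minimal number `W` of nonzero weights of a
`(σ, W)`-quantized network approximating `f` in `L²(Ω)` to within `ε`. -/
def minWeights (ρ : ℝ → ℝ) (d σ : ℕ) (Ω : Set (Fin d → ℝ))
    (f : Lp ℝ 2 (volume.restrict Ω)) (ε : ℝ) : ℕ∞ :=
  sInf ((fun W : ℕ => (W : ℕ∞)) ''
    {W : ℕ | ∃ g ∈ NNclass ρ d σ W,
      eLpNorm (fun z => f z - g z) 2 (volume.restrict Ω) ≤ ENNReal.ofReal ε})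

/-- The value carried by the source of an edge: `none` is the constant `1` (a bias), otherwise
the source is a neuron with value `v i` or an input coordinate `x j`. -/
def sourceValue {ι κ : Type*} (x : κ → ℝ) (v : ι → ℝ) : Option (ι ⊕ κ) → ℝ
  | none => 1
  | some (Sum.inl i) => v i
  | some (Sum.inr j) => x j

/-- The affine preactivation at neuron `i` of the graph whose edges (target, source, weight)
are listed by `c`. -/
def preactivation {α ι κ V : Type*} [Fintype α] [DecidableEq ι] (val : V → ℝ)
    (c : α → Option (ι × Option (ι ⊕ κ) × V)) (x : κ → ℝ) (v : ι → ℝ) (i : ι) : ℝ :=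
  ∑ k, (c k).elim 0 fun e => if e.1 = i then val e.2.2 * sourceValue x v e.2.1 else 0

/-- Iterated synchronous update of all the neurons of the graph `c`, starting from `0`. -/
def neuronState {α ι κ V : Type*} [Fintype α] [DecidableEq ι] (ρ : ℝ → ℝ) (val : V → ℝ)
    (c : α → Option (ι × Option (ι ⊕ κ) × V)) (x : κ → ℝ) : ℕ → ι → ℝ
  | 0 => 0
  | n + 1 => fun i => ρ (preactivation val c x (neuronState ρ val c x n) i)

/-- The function computed by the graph `c` at the output neuron `o`: the stationary value of
the preactivation at `o` under iterated updates. -/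
def graphOutput {α ι κ V : Type*} [Fintype α] [DecidableEq ι] (ρ : ℝ → ℝ) (val : V → ℝ)
    (c : α → Option (ι × Option (ι ⊕ κ) × V)) (o : ι) (x : κ → ℝ) : ℝ :=
  Filter.limUnder Filter.atTop fun n => preactivation val c x (neuronState ρ val c x n) o

namespace NeuralNet

/-- The neurons of all layers except the input layer. -/
abbrev Neuron (Φ : NeuralNet) : Type := Σ ℓ : Fin Φ.L, Fin (Φ.N (ℓ + 1))

/-- The positions of all weights; `none` stands for the bias. -/
abbrev Position (Φ : NeuralNet) : Type :=
  Σ ℓ : Fin Φ.L, Fin (Φ.N (ℓ + 1)) × Option (Fin (Φ.N ℓ))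

/-- The weight at a given position. -/
def weightAt (Φ : NeuralNet) (p : Φ.Position) : ℝ :=
  p.2.2.elim (Φ.b p.1 p.2.1) (Φ.A p.1 p.2.1)

/-- The neuron into which a weight feeds. -/
def target (Φ : NeuralNet) (p : Φ.Position) : Φ.Neuron := ⟨p.1, p.2.1⟩

/-- The label of the `j`-th neuron of layer `ℓ`, given labels of the non-input neurons. -/
def layerLabel (Φ : NeuralNet) {ι : Type*} (name : Φ.Neuron → ι) :
    (ℓ : ℕ) → ℓ < Φ.L → Fin (Φ.N ℓ) → ι ⊕ Fin (Φ.N 0)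
  | 0, _, j => Sum.inr j
  | ℓ + 1, h, j => Sum.inl (name ⟨⟨ℓ, by omega⟩, j⟩)

/-- The label of the source of a weight. -/
def sourceLabel (Φ : NeuralNet) {ι : Type*} (name : Φ.Neuron → ι) (p : Φ.Position) :
    Option (ι ⊕ Fin (Φ.N 0)) :=
  p.2.2.map (Φ.layerLabel name p.1 p.1.2)

open Classical in
/-- The set of positions of nonzero weights. -/
def support (Φ : NeuralNet) : Finset Φ.Position := Finset.univ.filter fun p => Φ.weightAt p ≠ 0

lemma card_support (Φ : NeuralNet) : Φ.support.card = Φ.weights := by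
  classical
  rw [support, Finset.card_filter, weights, Finset.sum_range, Fintype.sum_sigma]
  refine Finset.sum_congr rfl fun ℓ _ => ?_
  simp only [Finset.card_filter, Fintype.sum_prod_type, Fintype.sum_option, weightAt,
    Option.elim, Finset.sum_add_distrib]
  rw [add_comm]
  congr!

lemma exists_name (Φ : NeuralNet) {W : ℕ} (hW : Φ.weights ≤ W) :
    ∃ name : Φ.Neuron → Fin (W + 1),
      ∀ p ∈ Φ.support, ∀ u, name (Φ.target p) = name u → Φ.target p = u := by
  classical
  set act := Φ.support.image Φ.target
  have hcard : act.card ≤ W := Finset.card_image_le.trans (Φ.card_support.trans_le hW)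
  obtain ⟨e⟩ : Nonempty (act ↪ Fin W) :=
    Function.Embedding.nonempty_of_card_le (by simpa using hcard)
  refine ⟨fun u => if h : u ∈ act then (e ⟨u, h⟩).castSucc else Fin.last W, fun p hp u h => ?_⟩
  have hpa : Φ.target p ∈ act := Finset.mem_image_of_mem _ hp
  by_cases hu : u ∈ act
  · simpa [hpa, hu] using h
  · simp only [hpa, hu, dif_pos, dif_neg, not_false_eq_true] at h
    exact absurd h (Fin.castSucc_lt_last _).ne

/-- The edge list of `Φ`, with neurons renamed by `name` and weights represented in `V`. -/
def edges (Φ : NeuralNet) {α ι V : Type*} (name : Φ.Neuron → ι) (e : Φ.support → α)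
    (q : Φ.Position → V) : α → Option (ι × Option (ι ⊕ Fin (Φ.N 0)) × V) :=
  Function.extend e (fun p => some (name (Φ.target p), Φ.sourceLabel name p, q p)) fun _ => none

lemma preactivation_edges (Φ : NeuralNet) {α ι V : Type*} [Fintype α] [DecidableEq ι]
    {name : Φ.Neuron → ι} {e : Φ.support → α} (he : e.Injective) {q : Φ.Position → V}
    {val : V → ℝ} (hq : ∀ p, val (q p) = Φ.weightAt p)
    (hname : ∀ p ∈ Φ.support, ∀ u, name (Φ.target p) = name u → Φ.target p = u)
    (x : Fin (Φ.N 0) → ℝ) (v : ι → ℝ) (ℓ : Fin Φ.L) (i : Fin (Φ.N (ℓ + 1))) :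
    preactivation val (Φ.edges name e q) x v (name ⟨ℓ, i⟩) =
      (Φ.A ℓ).mulVec (fun j => sourceValue x v (some (Φ.layerLabel name ℓ ℓ.2 j))) i
        + Φ.b ℓ i := by
  classical
  have hsum : preactivation val (Φ.edges name e q) x v (name ⟨ℓ, i⟩) =
      ∑ p : Φ.support, if Φ.target p = ⟨ℓ, i⟩ then
        Φ.weightAt p * sourceValue x v (Φ.sourceLabel name p) else 0 := by
    symm
    refine Fintype.sum_of_injective e he _ _ (fun k hk => ?_) fun p => ?_
    · rw [edges, Function.extend_apply' _ _ _ (by simpa using hk)]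
      rfl
    · rw [edges, he.extend_apply]
      simp only [Option.elim, hq]
      congr 1
      exact propext ⟨fun h => by rw [h], hname p p.2 _⟩
  have hall : (∑ p : Φ.support, if Φ.target p = ⟨ℓ, i⟩ then
        Φ.weightAt p * sourceValue x v (Φ.sourceLabel name p) else 0) =
      ∑ p : Φ.Position, if Φ.target p = ⟨ℓ, i⟩ then
        Φ.weightAt p * sourceValue x v (Φ.sourceLabel name p) else 0 := by
    rw [Finset.sum_coe_sort Φ.support fun p => if Φ.target p = ⟨ℓ, i⟩ then
        Φ.weightAt p * sourceValue x v (Φ.sourceLabel name p) else 0]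
    refine Finset.sum_subset (Finset.subset_univ _) fun p _ hp => ?_
    have : Φ.weightAt p = 0 := by simpa [support] using hp
    simp [this]
  rw [hsum, hall, Fintype.sum_sigma, Finset.sum_eq_single ℓ, Fintype.sum_prod_type,
    Finset.sum_eq_single i, Fintype.sum_option]
  · simp [target, weightAt, sourceLabel, sourceValue, Matrix.mulVec, dotProduct, add_comm]
  · intro i' _ hi'
    simp [target, hi']
  · simp
  · intro ℓ' _ hℓ'
    refine Finset.sum_eq_zero fun y _ => if_neg fun h => hℓ' ?_
    exact congrArg Sigma.fst h
  · simp

lemma sourceValue_layerLabel (Φ : NeuralNet) (ρ : ℝ → ℝ) {α ι V : Type*} [Fintype α]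
    [DecidableEq ι] {name : Φ.Neuron → ι} {e : Φ.support → α} (he : e.Injective)
    {q : Φ.Position → V} {val : V → ℝ} (hq : ∀ p, val (q p) = Φ.weightAt p)
    (hname : ∀ p ∈ Φ.support, ∀ u, name (Φ.target p) = name u → Φ.target p = u)
    (x : Fin (Φ.N 0) → ℝ) (ℓ : ℕ) (hℓ : ℓ < Φ.L) (n : ℕ) (hn : ℓ ≤ n) (j : Fin (Φ.N ℓ)) :
    sourceValue x (neuronState ρ val (Φ.edges name e q) x n) (some (Φ.layerLabel name ℓ hℓ j)) =
      Φ.hidden ρ ℓ x j := by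
  induction ℓ generalizing n with
  | zero => rfl
  | succ ℓ ih =>
    obtain ⟨n, rfl⟩ : ∃ m, n = m + 1 := ⟨n - 1, by omega⟩
    simp only [layerLabel, sourceValue, neuronState, hidden]
    rw [Φ.preactivation_edges he hq hname x _ ⟨ℓ, by omega⟩ j]
    simp only [ih (by omega) n (by omega)]

lemma graphOutput_edges (Φ : NeuralNet) (ρ : ℝ → ℝ) {α ι V : Type*} [Fintype α]
    [DecidableEq ι] {name : Φ.Neuron → ι} {e : Φ.support → α} (he : e.Injective)
    {q : Φ.Position → V} {val : V → ℝ} (hq : ∀ p, val (q p) = Φ.weightAt p)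
    (hname : ∀ p ∈ Φ.support, ∀ u, name (Φ.target p) = name u → Φ.target p = u)
    (hL : 0 < Φ.L) (x : Fin (Φ.N 0) → ℝ) (i : Fin (Φ.N (Φ.L - 1 + 1))) :
    graphOutput ρ val (Φ.edges name e q) (name ⟨⟨Φ.L - 1, by omega⟩, i⟩) x =
      Φ.realize ρ x i := by
  refine Filter.Tendsto.limUnder_eq (tendsto_const_nhds.congr' ?_)
  filter_upwards [Filter.eventually_ge_atTop (Φ.L - 1)] with n hn
  rw [Φ.preactivation_edges he hq hname x _ ⟨Φ.L - 1, by omega⟩ i]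
  simp only [Φ.sourceValue_layerLabel ρ he hq hname x _ _ n hn, realize]

lemma measurable_hidden {ρ : ℝ → ℝ} (hρ : Measurable ρ) (Φ : NeuralNet) (ℓ : ℕ) :
    Measurable (Φ.hidden ρ ℓ) := by
  induction ℓ with
  | zero => exact measurable_id
  | succ ℓ ih =>
    refine measurable_pi_lambda _ fun i => hρ.comp (Measurable.add_const ?_ _)
    simp only [Matrix.mulVec, dotProduct]
    exact Finset.measurable_sum _ fun j _ => ((measurable_pi_apply j).comp ih).const_mul _

lemma measurable_realize {ρ : ℝ → ℝ} (hρ : Measurable ρ) (Φ : NeuralNet) :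
    Measurable (Φ.realize ρ) := by
  refine measurable_pi_lambda _ fun i => Measurable.add_const ?_ _
  simp only [Matrix.mulVec, dotProduct]
  exact Finset.measurable_sum _ fun j _ =>
    ((measurable_pi_apply j).comp (Φ.measurable_hidden hρ _)).const_mul _

end NeuralNet

lemma measurable_of_mem_NNclass {ρ : ℝ → ℝ} (hρ : Measurable ρ) {d σ W : ℕ}
    {g : (Fin d → ℝ) → ℝ} (hg : g ∈ NNclass ρ d σ W) : Measurable g := by
  obtain ⟨Φ, hL, rfl, hout, -, -, hg⟩ := hg
  rw [funext hg]
  exact (measurable_pi_iff.1 (Φ.measurable_realize hρ) ⟨0, by omega⟩)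

lemma zero_mem_NNclass (ρ : ℝ → ℝ) (d σ W : ℕ) : (fun _ => 0) ∈ NNclass ρ d σ W := by
  refine ⟨⟨1, fun n => if n = 0 then d else 1, fun _ => 0, fun _ => 0⟩, one_pos, rfl, rfl,
    ?_, ?_, ?_⟩
  · simp [NeuralNet.weights]
  · exact fun ℓ _ => ⟨fun i j => ⟨by simp, 0, by simp⟩, fun i => ⟨by simp, 0, by simp⟩⟩
  · intro x
    simp only [NeuralNet.realize, Matrix.mulVec, dotProduct, Matrix.zero_apply, zero_mul,
      Finset.sum_const_zero, Pi.zero_apply, add_zero]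

lemma quantized_mono {σ W W' : ℕ} (h : W ≤ W') {a : ℝ}
    (ha : |a| ≤ (W : ℝ) ^ (σ * Nat.clog 2 W) ∧
      ∃ k : ℤ, a = (k : ℝ) * 2 ^ (-(σ * (Nat.clog 2 W) ^ 2 : ℤ))) :
    |a| ≤ (W' : ℝ) ^ (σ * Nat.clog 2 W') ∧
      ∃ k : ℤ, a = (k : ℝ) * 2 ^ (-(σ * (Nat.clog 2 W') ^ 2 : ℤ)) := by
  obtain ⟨hb, k, rfl⟩ := ha
  have hc : Nat.clog 2 W ≤ Nat.clog 2 W' := Nat.clog_mono_right 2 h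
  refine ⟨hb.trans ?_, k * 2 ^ (σ * Nat.clog 2 W' ^ 2 - σ * Nat.clog 2 W ^ 2), ?_⟩
  · rcases Nat.eq_zero_or_pos W' with rfl | hW'
    · obtain rfl : W = 0 := by omega
      simp
    · have h1 : (1 : ℝ) ≤ W' := by exact_mod_cast hW'
      calc (W : ℝ) ^ (σ * Nat.clog 2 W) ≤ (W' : ℝ) ^ (σ * Nat.clog 2 W) := by gcongr
        _ ≤ _ := pow_le_pow_right₀ h1 (by gcongr)
  · have hle : σ * Nat.clog 2 W ^ 2 ≤ σ * Nat.clog 2 W' ^ 2 := by gcongr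
    push_cast
    rw [mul_assoc, ← zpow_natCast, ← zpow_add₀ two_ne_zero]
    congr 2
    push_cast [hle]
    ring

lemma NNclass_mono (ρ : ℝ → ℝ) (d σ : ℕ) {W W' : ℕ} (h : W ≤ W') :
    NNclass ρ d σ W ⊆ NNclass ρ d σ W' := by
  rintro g ⟨Φ, hL, hin, hout, hW, hΦ, hg⟩
  exact ⟨Φ, hL, hin, hout, hW.trans h, fun ℓ hℓ => ⟨fun i j => quantized_mono h ((hΦ ℓ hℓ).1 i j),
    fun i => quantized_mono h ((hΦ ℓ hℓ).2 i)⟩, hg⟩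

/-- A bound for the bit length needed to describe the functions in `NNclass ρ d σ W`. -/
def bitLength (d σ W : ℕ) : ℕ :=
  Nat.clog 2 W + 1 + W * (2 * Nat.clog 2 W + d + 6 + 2 * (σ * Nat.clog 2 W ^ 2))

/-- The bound for the integer numerators of `(σ, W)`-quantized weights. -/
def numeratorBound (σ W : ℕ) : ℕ := W ^ (σ * Nat.clog 2 W) * 2 ^ (σ * Nat.clog 2 W ^ 2)

/-- Descriptions of `(σ, W)`-quantized networks: edge lists with an output neuron. -/
abbrev NetCode (d σ W : ℕ) : Type :=
  (Fin W → Option (Fin (W + 1) × Option (Fin (W + 1) ⊕ Fin d) ×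
    Finset.Icc (-(numeratorBound σ W : ℤ)) (numeratorBound σ W))) × Fin (W + 1)

lemma card_netCode_le (d σ W : ℕ) : Fintype.card (NetCode d σ W) ≤ 2 ^ bitLength d σ W := by
  set c := Nat.clog 2 W with hc
  have hW : W ≤ 2 ^ c := Nat.le_pow_clog one_lt_two W
  have hpos : 1 ≤ 2 ^ c := Nat.one_le_two_pow
  have hM : numeratorBound σ W ≤ 2 ^ (2 * (σ * c ^ 2)) := by
    calc numeratorBound σ W ≤ (2 ^ c) ^ (σ * c) * 2 ^ (σ * c ^ 2) := by
          unfold numeratorBound; gcongr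
      _ = 2 ^ (2 * (σ * c ^ 2)) := by
          rw [← pow_mul, ← pow_add]; congr 1; ring
  have h1 : W + 1 ≤ 2 ^ (c + 1) := by rw [pow_succ]; omega
  have h2 : W + 1 + d + 1 ≤ 2 ^ (c + d + 2) := by
    have hd : d < 2 ^ d := Nat.lt_two_pow_self
    have : 2 ^ (c + d + 2) = 2 ^ c * 2 ^ d * 4 := by
      rw [pow_add, pow_add]
      norm_num
    rw [this]
    nlinarith
  have h3 : 2 * numeratorBound σ W + 1 ≤ 2 ^ (2 * (σ * c ^ 2) + 2) := by
    have : 1 ≤ 2 ^ (2 * (σ * c ^ 2)) := Nat.one_le_two_pow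
    rw [pow_add]
    omega
  have hIcc : Fintype.card (Finset.Icc (-(numeratorBound σ W : ℤ)) (numeratorBound σ W)) =
      2 * numeratorBound σ W + 1 := by
    rw [Fintype.card_coe, Int.card_Icc]
    omega
  have h4 : (W + 1) * ((W + 1 + d + 1) * (2 * numeratorBound σ W + 1)) + 1 ≤
      2 ^ (2 * c + d + 6 + 2 * (σ * c ^ 2)) := by
    have hle : (W + 1) * ((W + 1 + d + 1) * (2 * numeratorBound σ W + 1)) ≤
        2 ^ (c + 1) * (2 ^ (c + d + 2) * 2 ^ (2 * (σ * c ^ 2) + 2)) := by gcongr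
    rw [← pow_add, ← pow_add] at hle
    have heq : 2 * c + d + 6 + 2 * (σ * c ^ 2) =
        c + 1 + (c + d + 2 + (2 * (σ * c ^ 2) + 2)) + 1 := by ring
    rw [heq, pow_succ]
    have := Nat.one_le_two_pow (n := c + 1 + (c + d + 2 + (2 * (σ * c ^ 2) + 2)))
    omega
  simp only [Fintype.card_prod, Fintype.card_fun, Fintype.card_option, Fintype.card_sum,
    Fintype.card_fin, hIcc]
  calc _ ≤ (2 ^ (2 * c + d + 6 + 2 * (σ * c ^ 2))) ^ W * 2 ^ (c + 1) := by gcongr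
    _ = 2 ^ bitLength d σ W := by
      rw [← pow_mul, ← pow_add, bitLength, ← hc]
      congr 1
      ring

/-- The function described by a code. -/
def NetCode.decode (ρ : ℝ → ℝ) {d σ W : ℕ} (c : NetCode d σ W) : (Fin d → ℝ) → ℝ :=
  graphOutput ρ (fun k : Finset.Icc (-(numeratorBound σ W : ℤ)) (numeratorBound σ W) =>
    ((k : ℤ) : ℝ) * 2 ^ (-(σ * (Nat.clog 2 W) ^ 2 : ℤ))) c.1 c.2

lemma NNclass_subset_range_decode (ρ : ℝ → ℝ) (d σ W : ℕ) :
    NNclass ρ d σ W ⊆ Set.range (NetCode.decode ρ (d := d) (σ := σ) (W := W)) := by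
  rintro g ⟨Φ, hL, rfl, hout, hW, hΦ, hg⟩
  obtain ⟨name, hname⟩ := Φ.exists_name hW
  obtain ⟨e⟩ : Nonempty (Φ.support ↪ Fin W) :=
    Function.Embedding.nonempty_of_card_le (by simpa [Φ.card_support] using hW)
  have hq : ∀ p : Φ.Position,
      ∃ k : Finset.Icc (-(numeratorBound σ W : ℤ)) (numeratorBound σ W),
        ((k : ℤ) : ℝ) * 2 ^ (-(σ * (Nat.clog 2 W) ^ 2 : ℤ)) = Φ.weightAt p := by
    intro p
    have hp : |Φ.weightAt p| ≤ (W : ℝ) ^ (σ * Nat.clog 2 W) ∧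
        ∃ k : ℤ, Φ.weightAt p = (k : ℝ) * 2 ^ (-(σ * (Nat.clog 2 W) ^ 2 : ℤ)) := by
      obtain ⟨ℓ, i, _ | j⟩ := p
      · exact (hΦ ℓ ℓ.2).2 i
      · exact (hΦ ℓ ℓ.2).1 i j
    obtain ⟨hb, k, hk⟩ := hp
    refine ⟨⟨k, ?_⟩, hk.symm⟩
    rw [Finset.mem_Icc, ← abs_le]
    have hpos : (0 : ℝ) < 2 ^ (σ * Nat.clog 2 W ^ 2) := by positivity
    have hz : (2 : ℝ) ^ (-(σ * (Nat.clog 2 W) ^ 2 : ℤ)) = (2 ^ (σ * Nat.clog 2 W ^ 2))⁻¹ := by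
      rw [zpow_neg]
      norm_cast
    rw [hk, hz, abs_mul, abs_inv, abs_of_pos hpos, ← div_eq_mul_inv, div_le_iff₀ hpos] at hb
    have : ((|k| : ℤ) : ℝ) ≤ ((numeratorBound σ W : ℤ) : ℝ) := by
      rw [numeratorBound]
      push_cast
      exact hb
    exact_mod_cast this
  choose q hq using hq
  refine ⟨(Φ.edges name e q, name ⟨⟨Φ.L - 1, by omega⟩, (⟨0, by omega⟩ : Fin (Φ.N (Φ.L - 1 + 1)))⟩), funext fun x => ?_⟩
  rw [hg x]
  exact Φ.graphOutput_edges ρ e.injective (val := fun k : Finset.Icc (-(numeratorBound σ W : ℤ))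
    (numeratorBound σ W) => ((k : ℤ) : ℝ) * 2 ^ (-(σ * (Nat.clog 2 W) ^ 2 : ℤ)))
    hq hname hL x _

open Classical in
/-- The largest `W ≤ R` all of whose `(σ, W)`-quantized networks can be described by `R` bits. -/
def weightBudget (d σ R : ℕ) : ℕ := Nat.findGreatest (fun W => bitLength d σ W ≤ R) R

lemma bitLength_weightBudget_le (d σ : ℕ) {R : ℕ} (hR : 0 < R) :
    bitLength d σ (weightBudget d σ R) ≤ R := by
  classical
  refine Nat.findGreatest_spec (P := fun W => bitLength d σ W ≤ R) (Nat.zero_le R) ?_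
  simpa [bitLength] using Nat.succ_le_of_lt hR

lemma bitLength_le_rpow (d σ : ℕ) {s : ℝ} (hs : 0 < s) :
    ∃ B : ℝ, 1 ≤ B ∧ ∀ n : ℕ, 0 < n → (bitLength d σ n : ℝ) ≤ B * (n : ℝ) ^ (1 + 2 * s) := by
  set C : ℝ := 2 + 1 / (s * Real.log 2) with hC
  have hlog2 : 0 < Real.log 2 := Real.log_pos one_lt_two
  have hC2 : 2 ≤ C := by
    have : 0 < 1 / (s * Real.log 2) := by positivity
    linarith
  set A : ℝ := 2 * σ + d + 9 with hA
  have hA9 : 9 ≤ A := by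
    have : (0 : ℝ) ≤ 2 * σ + d := by positivity
    linarith
  refine ⟨A * C ^ 2, by nlinarith, fun n hn => ?_⟩
  have hn1 : (1 : ℝ) ≤ n := by exact_mod_cast hn
  set c := Nat.clog 2 n with hc
  have hns : 1 ≤ (n : ℝ) ^ s := Real.one_le_rpow hn1 hs.le
  have hclog : (c : ℝ) + 1 ≤ C * (n : ℝ) ^ s := by
    have hlog : ((c : ℝ) - 1) * Real.log 2 ≤ Real.log n := by
      rcases Nat.eq_zero_or_pos c with h0 | hpos
      · rw [h0]
        have := Real.log_nonneg hn1
        push_cast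
        linarith
      · have hlt : 2 ^ (c - 1) ≤ n := by
          have h1n : 1 < n := by
            by_contra hcon
            obtain rfl : n = 1 := by omega
            simp [hc] at hpos
          exact (Nat.pow_pred_clog_lt_self one_lt_two h1n).le
        have hlt' : (2 : ℝ) ^ (c - 1) ≤ n := by exact_mod_cast hlt
        have := Real.log_le_log (by positivity) hlt'
        rw [Real.log_pow, Nat.cast_sub hpos] at this
        simpa using this
    have hrp : Real.log n ≤ (n : ℝ) ^ s / s := Real.log_le_rpow_div (by positivity) hs
    have : (c : ℝ) - 1 ≤ 1 / (s * Real.log 2) * (n : ℝ) ^ s := by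
      rw [← le_div_iff₀ hlog2] at hlog
      refine hlog.trans ?_
      rw [div_le_iff₀ hlog2]
      refine hrp.trans_eq ?_
      field_simp
    rw [hC, add_mul]
    linarith
  have hbit : (bitLength d σ n : ℝ) ≤ A * n * ((c : ℝ) + 1) ^ 2 := by
    rw [bitLength, ← hc]
    push_cast
    have hc0 : (0 : ℝ) ≤ c := by positivity
    have h1 : (c : ℝ) + 1 ≤ n * ((c : ℝ) + 1) ^ 2 := by nlinarith
    have h2 : 2 * (c : ℝ) + d + 6 + 2 * (σ * (c : ℝ) ^ 2) ≤ (A - 1) * ((c : ℝ) + 1) ^ 2 := by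
      have hσ0 : (0 : ℝ) ≤ σ := by positivity
      have hd0 : (0 : ℝ) ≤ d := by positivity
      have : (0 : ℝ) ≤ σ * c := by positivity
      have : (0 : ℝ) ≤ d * c := by positivity
      have : (0 : ℝ) ≤ d * c ^ 2 := by positivity
      rw [hA]
      nlinarith
    nlinarith [mul_le_mul_of_nonneg_left h2 (zero_le_one.trans hn1)]
  calc (bitLength d σ n : ℝ) ≤ A * n * ((c : ℝ) + 1) ^ 2 := hbit
    _ ≤ A * n * (C * (n : ℝ) ^ s) ^ 2 := by gcongr
    _ = A * C ^ 2 * (n : ℝ) ^ (1 + 2 * s) := by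
      rw [Real.rpow_add (by positivity), Real.rpow_one, mul_comm 2 s, Real.rpow_mul (by positivity),
        Real.rpow_two]
      ring

lemma le_weightBudget_rpow (d σ : ℕ) {s : ℝ} (hs : 0 < s) :
    ∃ B : ℝ, 1 ≤ B ∧ ∀ R : ℕ, (R : ℝ) ≤ B * ((weightBudget d σ R : ℝ) + 1) ^ (1 + 2 * s) := by
  classical
  obtain ⟨B, hB, hbit⟩ := bitLength_le_rpow d σ hs
  refine ⟨B, hB, fun R => ?_⟩
  set w := weightBudget d σ R with hw
  have hw1 : (1 : ℝ) ≤ (w : ℝ) + 1 := by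
    have : (0 : ℝ) ≤ w := by positivity
    linarith
  by_cases hR : w + 1 ≤ R
  · have hlt : R < bitLength d σ (w + 1) := by
      have := Nat.findGreatest_is_greatest (P := fun W => bitLength d σ W ≤ R)
        (Nat.lt_succ_self w) hR
      simpa using this
    have h1 := hbit (w + 1) (by omega)
    push_cast at h1
    exact le_trans (by exact_mod_cast hlt.le) h1
  · have hle : (R : ℝ) ≤ (w : ℝ) + 1 := by exact_mod_cast (by omega : R ≤ w + 1)
    have hpow : (w : ℝ) + 1 ≤ ((w : ℝ) + 1) ^ (1 + 2 * s) :=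
      Real.self_le_rpow_of_one_le hw1 (by linarith)
    nlinarith

lemma exists_approx_of_minWeights_le {ρ : ℝ → ℝ} {d σ : ℕ} {Ω : Set (Fin d → ℝ)}
    {f : Lp ℝ 2 (volume.restrict Ω)} {ε : ℝ} {W : ℕ}
    (h : ENat.toENNReal (minWeights ρ d σ Ω f ε) ≤ W) :
    ∃ g ∈ NNclass ρ d σ W,
      eLpNorm (fun z => f z - g z) 2 (volume.restrict Ω) ≤ ENNReal.ofReal ε := by
  have h' : minWeights ρ d σ Ω f ε ≤ (W : ℕ∞) := by
    rw [← ENat.toENNReal_le]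
    simpa using h
  set S := (fun W : ℕ => (W : ℕ∞)) '' {W : ℕ | ∃ g ∈ NNclass ρ d σ W,
      eLpNorm (fun z => f z - g z) 2 (volume.restrict Ω) ≤ ENNReal.ofReal ε} with hS
  have hne : S.Nonempty := by
    by_contra hcon
    rw [Set.not_nonempty_iff_eq_empty] at hcon
    rw [minWeights, ← hS, hcon, sInf_empty] at h'
    exact absurd h' (by simp)
  obtain ⟨W', ⟨g, hg, hgε⟩, hW'⟩ := csInf_mem hne
  have hle : W' ≤ W := by
    have : (W' : ℕ∞) ≤ W := by
      have h2 : (W' : ℕ∞) = minWeights ρ d σ Ω f ε := hW'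
      rwa [h2]
    exact_mod_cast this
  exact ⟨g, NNclass_mono ρ d σ hle hg, hgε⟩

/-- A decoder whose range contains all square-integrable functions in the network class,
together with a nearest-point encoder. -/
lemma exists_encoder_decoder {ρ : ℝ → ℝ} (hρ : Measurable ρ) (d σ : ℕ) (Ω : Set (Fin d → ℝ))
    {R W : ℕ} (hR : bitLength d σ W ≤ R) :
    ∃ (E : Lp ℝ 2 (volume.restrict Ω) → (Fin R → Bool))
      (D : (Fin R → Bool) → Lp ℝ 2 (volume.restrict Ω)),
      ∀ f, ∀ ε : ℝ, 0 ≤ ε → ∀ g ∈ NNclass ρ d σ W,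
        eLpNorm (fun z => f z - g z) 2 (volume.restrict Ω) ≤ ENNReal.ofReal ε →
        ‖f - D (E f)‖ ≤ ε := by
  classical
  have hcard : Fintype.card (NetCode d σ W) ≤ Fintype.card (Fin R → Bool) := by
    refine (card_netCode_le d σ W).trans ?_
    simpa using Nat.pow_le_pow_right two_pos hR
  obtain ⟨emb⟩ := Function.Embedding.nonempty_of_card_le hcard
  have : Nonempty (NetCode d σ W) := ⟨(fun _ => none, 0)⟩
  obtain ⟨s, hs⟩ : ∃ s : (Fin R → Bool) → NetCode d σ W, s.Surjective :=
    ⟨Function.invFun emb, Function.invFun_surjective emb.injective⟩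
  let D : (Fin R → Bool) → Lp ℝ 2 (volume.restrict Ω) := fun c =>
    if h : MemLp ((s c).decode ρ) 2 (volume.restrict Ω) then h.toLp _ else 0
  choose E hE using fun f : Lp ℝ 2 (volume.restrict Ω) => Finite.exists_min fun c => ‖f - D c‖
  refine ⟨E, D, fun f ε hε g hg hfg => ?_⟩
  obtain ⟨code, rfl⟩ := NNclass_subset_range_decode ρ d σ W hg
  obtain ⟨c, rfl⟩ := hs code
  have hdiff : MemLp (fun z => f z - (s c).decode ρ z) 2 (volume.restrict Ω) :=
    ⟨(Lp.aestronglyMeasurable f).sub (measurable_of_mem_NNclass hρ hg).aestronglyMeasurable,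
      hfg.trans_lt ENNReal.ofReal_lt_top⟩
  have hmem : MemLp ((s c).decode ρ) 2 (volume.restrict Ω) := by
    convert (Lp.memLp f).sub hdiff using 1
    ext z
    simp
  refine (hE f c).trans ?_
  simp only [D, dif_pos hmem]
  rw [Lp.norm_def]
  refine ENNReal.toReal_le_of_le_ofReal hε (le_trans (le_of_eq ?_) hfg)
  refine eLpNorm_congr_ae ?_
  filter_upwards [Lp.coeFn_sub f (hmem.toLp _), hmem.coeFn_toLp] with z h1 h2
  rw [h1, Pi.sub_apply, h2]

theorem statement19 (d : ℕ) (hd : 0 < d) (Ω : Set (Fin d → ℝ)) (hΩ : MeasurableSet Ω)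
    (ρ : ℝ → ℝ) (hρ : Measurable ρ) (hρ0 : ρ 0 = 0) (σ : ℕ) (hσ : 0 < σ) :
    ∃ (E : (R : ℕ) → Lp ℝ 2 (volume.restrict Ω) → (Fin R → Bool))
      (D : (R : ℕ) → (Fin R → Bool) → Lp ℝ 2 (volume.restrict Ω)),
      ∀ τ : ℝ, 0 < τ → ∀ δ : ℝ, 0 < δ → δ < 1 / τ →
        ∀ f : Lp ℝ 2 (volume.restrict Ω),
          (∃ K : ℝ, 0 < K ∧ ∀ ε : ℝ, 0 < ε → ε < 1 →
            ENat.toENNReal (minWeights ρ d σ Ω f ε) ≤ ENNReal.ofReal (K * ε ^ (-τ))) →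
          ∃ K' : ℝ, ∀ R : ℕ, 0 < R →
            (R : ℝ) ^ (1 / τ - δ) * ‖f - D R (E R f)‖ ≤ K' := by
  have hcodec : ∀ R : ℕ, ∃ (E : Lp ℝ 2 (volume.restrict Ω) → (Fin R → Bool))
      (D : (Fin R → Bool) → Lp ℝ 2 (volume.restrict Ω)),
      0 < R → ∀ f, ∀ ε : ℝ, 0 ≤ ε → ∀ g ∈ NNclass ρ d σ (weightBudget d σ R),
        eLpNorm (fun z => f z - g z) 2 (volume.restrict Ω) ≤ ENNReal.ofReal ε →
        ‖f - D (E f)‖ ≤ ε := by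
    intro R
    rcases Nat.eq_zero_or_pos R with rfl | hR
    · exact ⟨fun _ _ => false, fun _ => 0, fun h => absurd h (lt_irrefl 0)⟩
    · obtain ⟨E, D, h⟩ := exists_encoder_decoder hρ d σ Ω (bitLength_weightBudget_le d σ hR)
      exact ⟨E, D, fun _ => h⟩
  choose E D hED using hcodec
  refine ⟨E, D, fun τ hτ δ hδ hδτ f ⟨K, hK, hf⟩ => ?_⟩
  have hgap : 0 < 1 / τ - δ := sub_pos.2 hδτ
  set s : ℝ := ((1 / τ) / (1 / τ - δ) - 1) / 2 with hs
  have hs0 : 0 < s := by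
    have : 1 < (1 / τ) / (1 / τ - δ) := by
      rw [one_lt_div hgap]
      linarith
    rw [hs]
    linarith
  have hexp : (1 + 2 * s) * (1 / τ - δ) = 1 / τ := by
    have : 1 + 2 * s = (1 / τ) / (1 / τ - δ) := by
      rw [hs]
      ring
    rw [this, div_mul_cancel₀ _ hgap.ne']
  obtain ⟨B, hB, hbudget⟩ := le_weightBudget_rpow d σ hs0
  have hrate : ∀ R : ℕ, (R : ℝ) ^ (1 / τ - δ) ≤
      B ^ (1 / τ - δ) * ((weightBudget d σ R : ℝ) + 1) ^ (1 / τ) := by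
    intro R
    refine (Real.rpow_le_rpow (by positivity) (hbudget R) hgap.le).trans_eq ?_
    rw [Real.mul_rpow (by positivity) (by positivity), ← Real.rpow_mul (by positivity), hexp]
  refine ⟨B ^ (1 / τ - δ) * (2 * K) ^ (1 / τ) + B ^ (1 / τ - δ) * (K + 1) ^ (1 / τ) * ‖f‖,
    fun R hR => ?_⟩
  set w := weightBudget d σ R with hw
  by_cases hwK : K < w
  · have hw0 : (0 : ℝ) < w := hK.trans hwK
    have hw1 : (1 : ℝ) ≤ w := by exact_mod_cast hw0
    have hKw : K / w < 1 := (div_lt_one hw0).2 hwK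
    have hεpos : 0 < (K / w) ^ (1 / τ) := by positivity
    have hε := hf ((K / w) ^ (1 / τ)) hεpos
      (Real.rpow_lt_one (by positivity) hKw (by positivity))
    have hval : K * ((K / w) ^ (1 / τ)) ^ (-τ) = w := by
      rw [← Real.rpow_mul (by positivity), show 1 / τ * -τ = -1 by field_simp, Real.rpow_neg_one]
      field_simp
    rw [hval, ENNReal.ofReal_natCast] at hε
    obtain ⟨g, hg, hfg⟩ := exists_approx_of_minWeights_le hε
    have herr := hED R hR f _ hεpos.le g hg hfg
    have hnonneg : 0 ≤ B ^ (1 / τ - δ) * (K + 1) ^ (1 / τ) * ‖f‖ := by positivity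
    calc (R : ℝ) ^ (1 / τ - δ) * ‖f - D R (E R f)‖
        ≤ (B ^ (1 / τ - δ) * ((w : ℝ) + 1) ^ (1 / τ)) * (K / w) ^ (1 / τ) :=
          mul_le_mul (hrate R) herr (norm_nonneg _) (by positivity)
      _ = B ^ (1 / τ - δ) * (((w : ℝ) + 1) * (K / w)) ^ (1 / τ) := by
          rw [mul_assoc, ← Real.mul_rpow (by positivity) (by positivity)]
      _ ≤ B ^ (1 / τ - δ) * (2 * K) ^ (1 / τ) := by
          have : ((w : ℝ) + 1) * (K / w) ≤ 2 * K := by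
            rw [← mul_div_assoc, div_le_iff₀ hw0]
            nlinarith
          gcongr
      _ ≤ _ := le_add_of_nonneg_right hnonneg
  · have herr : ‖f - D R (E R f)‖ ≤ ‖f‖ := by
      refine hED R hR f _ (norm_nonneg _) _ (zero_mem_NNclass ρ d σ _) ?_
      simp only [sub_zero]
      rw [Lp.norm_def, ENNReal.ofReal_toReal (Lp.eLpNorm_ne_top f)]
    have hwle : (w : ℝ) + 1 ≤ K + 1 := by linarith
    calc (R : ℝ) ^ (1 / τ - δ) * ‖f - D R (E R f)‖
        ≤ (B ^ (1 / τ - δ) * ((w : ℝ) + 1) ^ (1 / τ)) * ‖f‖ :=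
          mul_le_mul (hrate R) herr (norm_nonneg _) (by positivity)
      _ ≤ B ^ (1 / τ - δ) * (K + 1) ^ (1 / τ) * ‖f‖ := by gcongr
      _ ≤ _ := le_add_of_nonneg_left (by positivity)
end
end
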